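/- arXiv:1111.2901 — 6 statements merged into one kernel-verified Lean document; each statement's English description precedes it below -/
import Mathlib

section
/- Let K be a field and A a K-algebra that is semiprimary and left self-injective. If the dimension of A/Jac(A) over K is at most countable (equivalently, every simple left A-module has at most countable K-dimension), then A is quasi-Frobenius. -/
open Cardinal


/-- A ring is *semiprimary* if its Jacobson radical `J` is nilpotent
(`J ^ n = 0`, expressed elementwise: every product of `n` elements of `J` vanishes)
and the quotient ring `A / J` is a semisimple ring. -/
def IsSemiprimary (A : Type*) [Ring A] : Prop :=
  IsSemisimpleRing (RingCon.Quotient (⊥ : TwoSidedIdeal A).jacobson.ringCon) ∧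
  ∃ n : ℕ, 0 < n ∧ ∀ f : Fin n → A,
    (∀ i, f i ∈ Ideal.jacobson (⊥ : Ideal A)) → (List.ofFn f).prod = 0

/-- A ring is *quasi-Frobenius* if it is left self-injective and left artinian. -/
def IsQuasiFrobenius (A : Type*) [Ring A] : Prop :=
  Module.Injective A A ∧ IsArtinianRing A


namespace FaithQF
universe u v

section prelim
variable {A : Type v} [Ring A]

theorem isNilpotent_of_elementwise (J : Ideal A) (n : ℕ)
    (h : ∀ f : Fin n → A, (∀ i, f i ∈ J) → (List.ofFn f).prod = 0) : J ^ n = ⊥ := by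
  have key : ∀ k : ℕ, ∀ x ∈ J ^ k, ∀ l : List A, (∀ a ∈ l, a ∈ J) → k + l.length = n →
      x * l.prod = 0 := by
    intro k
    induction k with
    | zero =>
      intro x _ l hl hn
      have hn' : l.length = n := by omega
      subst hn'
      have := h l.get (fun i => hl _ (List.get_mem _ _))
      rw [List.ofFn_get] at this
      rw [this, mul_zero]
    | succ k ih =>
      intro x hx l hl hn
      rw [Submodule.pow_succ, ← smul_eq_mul] at hx
      induction hx using Submodule.smul_induction_on' with
      | smul r hr y hy =>
        have := ih r hr (y :: l) (by simpa using ⟨hy, hl⟩) (by simp; omega)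
        rw [List.prod_cons] at this
        rw [smul_eq_mul, mul_assoc, this]
      | add a _ b _ ha hb => rw [add_mul, ha, hb, add_zero]
  rw [eq_bot_iff]
  intro x hx
  simpa using key n x hx [] (by simp) (by simp)

theorem isSemiprimaryRing_of
    (h : IsSemisimpleRing (RingCon.Quotient (⊥ : TwoSidedIdeal A).jacobson.ringCon))
    (h2 : ∃ n : ℕ, 0 < n ∧ ∀ f : Fin n → A,
    (∀ i, f i ∈ Ideal.jacobson (⊥ : Ideal A)) → (List.ofFn f).prod = 0) :
    IsSemiprimaryRing A := by
  constructor
  · let f : A →+* A ⧸ Ring.jacobson A := Ideal.Quotient.mk _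
    let g : RingCon.Quotient (⊥ : TwoSidedIdeal A).jacobson.ringCon →+* A ⧸ Ring.jacobson A :=
      RingCon.lift _ f (by
        intro x y hxy
        rw [TwoSidedIdeal.rel_iff, TwoSidedIdeal.jacobson] at hxy
        show f x = f y
        rw [← sub_eq_zero, ← map_sub]
        refine Ideal.Quotient.eq_zero_iff_mem.2 ?_
        rw [← Ideal.jacobson_bot]
        simpa using hxy)
    refine g.isSemisimpleRing_of_surjective ?_
    intro y
    obtain ⟨x, rfl⟩ := Ideal.Quotient.mk_surjective y
    exact ⟨(x : RingCon.Quotient _), rfl⟩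
  · obtain ⟨n, _, hn⟩ := h2
    refine ⟨n, ?_⟩
    rw [← Ideal.jacobson_bot]
    exact isNilpotent_of_elementwise _ n hn

theorem semisimple_quot [IsSemiprimaryRing A] : IsSemisimpleModule A (A ⧸ Ring.jacobson A) := by
  have : Module.IsTorsionBySet A (A ⧸ Ring.jacobson A) (Ring.jacobson A) := by
    rw [Module.isTorsionBySet_quotient_iff]
    intro x r hr
    exact Ideal.mul_mem_right _ _ hr
  let _ := this.module
  exact (this.semilinearMap.isSemisimpleModule_iff_of_bijective Function.bijective_id).2
      inferInstance

theorem exists_simple [IsSemiprimaryRing A] (M : Type v) [AddCommGroup M] [Module A M]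
    (hM : Nontrivial M) : ∃ m : Submodule A M, IsSimpleModule A m := by
  revert hM
  refine IsSemiprimaryRing.induction A A M
    (P := fun M => Nontrivial M → ∃ m : Submodule A M, IsSimpleModule A m) ?_ ?_
  · intro M _ _ _ _ _ _ _
    exact IsSemisimpleModule.exists_simple_submodule A M
  · intro M _ _ _ _ N hN hQ hM
    by_cases h : N = ⊥
    · have e : (M ⧸ N) ≃ₗ[A] M := Submodule.quotEquivOfEqBot N h
      obtain ⟨m, hm⟩ := hQ e.toEquiv.nontrivial
      exact ⟨m.map e.toLinearMap, .congr (m.equivMapOfInjective e.toLinearMap e.injective).symm⟩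
    · obtain ⟨m, hm⟩ := hN (Submodule.nontrivial_iff_ne_bot.2 h)
      exact ⟨m.map N.subtype, .congr (m.equivMapOfInjective _ N.subtype_injective).symm⟩

theorem simple_embeds_quot [IsSemiprimaryRing A] (U : Type v) [AddCommGroup U] [Module A U]
    [IsSimpleModule A U] :
    ∃ S : Submodule A (A ⧸ Ring.jacobson A), Nonempty (S ≃ₗ[A] U) := by
  have := semisimple_quot (A := A)
  have := IsSimpleModule.nontrivial A U
  obtain ⟨x, hx⟩ := exists_ne (0 : U)
  have hle : Ring.jacobson A ≤ LinearMap.ker (LinearMap.toSpanSingleton A U x) :=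
    fun r hr => by
      have := IsSemisimpleModule.jacobson_le_annihilator A U hr
      simpa using Module.mem_annihilator.1 this x
  let f := (Ring.jacobson A).liftQ (LinearMap.toSpanSingleton A U x) hle
  have hf : Function.Surjective f := by
    intro y
    obtain ⟨a, ha⟩ := IsSimpleModule.toSpanSingleton_surjective A hx y
    exact ⟨Submodule.Quotient.mk a, ha⟩
  obtain ⟨P, ⟨e⟩⟩ := IsSemisimpleModule.exists_submodule_linearEquiv_quotient (LinearMap.ker f)
  exact ⟨P, ⟨e.trans (f.quotKerEquivOfSurjective hf)⟩⟩

theorem nil_of_mem [IsSemiprimaryRing A] {x : A} (hx : x ∈ Ring.jacobson A) : IsNilpotent x := by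
  obtain ⟨n, hn⟩ := IsSemiprimaryRing.isNilpotent (R := A)
  refine ⟨n, ?_⟩
  have := Ideal.pow_mem_pow hx n
  rw [hn] at this
  simpa using this

theorem exists_idem [IsSemiprimaryRing A] (m : Submodule A (A ⧸ Ring.jacobson A)) :
    ∃ e : A, IsIdempotentElem e ∧
      Submodule.span A {(Submodule.Quotient.mk e : A ⧸ Ring.jacobson A)} = m := by
  have := semisimple_quot (A := A)
  obtain ⟨q, hq⟩ := exists_isCompl m
  let p := m.projection q hq
  obtain ⟨a, ha⟩ := Submodule.Quotient.mk_surjective _ (p (Submodule.Quotient.mk 1))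
  have hp : ∀ x : A, p (Submodule.Quotient.mk x) = Submodule.Quotient.mk (x * a) := by
    intro x
    have : (Submodule.Quotient.mk x : A ⧸ Ring.jacobson A) = x • Submodule.Quotient.mk 1 := by
      rw [← Submodule.Quotient.mk_smul, smul_eq_mul, mul_one]
    rw [this, map_smul, ← ha, ← Submodule.Quotient.mk_smul, smul_eq_mul]
  have hmem : ∀ y, p y ∈ m := fun y => Submodule.projection_apply_mem hq y
  have hfix : ∀ y ∈ m, p y = y := fun y hy => Submodule.projection_apply_left hq ⟨y, hy⟩
  have hidem : IsIdempotentElem (Ideal.Quotient.mk (Ring.jacobson A) a) := by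
    have h1 : p (Submodule.Quotient.mk a) = Submodule.Quotient.mk a := by
      apply hfix; rw [ha]; exact hmem _
    rw [hp] at h1
    show _ * _ = _
    rw [← map_mul]
    exact h1
  obtain ⟨e, he, hea⟩ := exists_isIdempotentElem_eq_of_ker_isNilpotent
    (Ideal.Quotient.mk (Ring.jacobson A))
    (fun x hx => nil_of_mem (by simpa using hx)) _ ⟨a, rfl⟩ hidem
  refine ⟨e, he, ?_⟩
  have hea' : (Submodule.Quotient.mk e : A ⧸ Ring.jacobson A) = Submodule.Quotient.mk a := hea
  rw [hea']
  apply le_antisymm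
  · rw [Submodule.span_singleton_le_iff_mem, ha]
    exact hmem _
  · intro y hy
    obtain ⟨x, rfl⟩ := Submodule.Quotient.mk_surjective _ y
    rw [← hfix _ hy, hp, ← smul_eq_mul, Submodule.Quotient.mk_smul]
    exact Submodule.smul_mem _ _ (Submodule.mem_span_singleton_self _)

/-- Left self-injective semiprimary rings are left Kasch. -/
theorem kasch [IsSemiprimaryRing A] (hinj : Module.Injective A A)
    (U : Type v) [AddCommGroup U] [Module A U] [IsSimpleModule A U] :
    ∃ φ : U →ₗ[A] A, φ ≠ 0 := by
  classical
  have hss := semisimple_quot (A := A)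
  -- extension of maps out of left ideals by right multiplications
  have hext : ∀ (I : Ideal A) (g : I →ₗ[A] A), ∃ a : A, ∀ x : I, g x = x * a := by
    intro I g
    obtain ⟨h, hh⟩ := hinj.out I.subtype I.subtype_injective g
    refine ⟨h 1, fun x => ?_⟩
    rw [← hh x, ← smul_eq_mul, ← map_smul]
    simp
  have data : ∀ c : isotypicComponents A (A ⧸ Ring.jacobson A),
      ∃ (S : Submodule A (A ⧸ Ring.jacobson A)) (e : A) (T : Ideal A),
        IsSimpleModule A S ∧ c.1 = isotypicComponent A (A ⧸ Ring.jacobson A) S ∧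
        IsIdempotentElem e ∧
        Submodule.span A {(Submodule.Quotient.mk e : A ⧸ Ring.jacobson A)} = S ∧
        IsSimpleModule A T ∧ ∀ t ∈ T, t * e = t := by
    rintro ⟨c, S, hS, hc⟩
    obtain ⟨e, he, hspan⟩ := exists_idem S
    have hne : e ≠ 0 := by
      rintro rfl
      have := IsSimpleModule.nontrivial A S
      apply Submodule.nontrivial_iff_ne_bot.1 this
      rw [← hspan]; simp
    have hnt : Nontrivial (Ideal.span {e} : Ideal A) :=
      Submodule.nontrivial_iff_ne_bot.2 (by simpa using hne)
    obtain ⟨T, hT⟩ := exists_simple (A := A) (Ideal.span {e} : Ideal A) hnt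
    refine ⟨S, e, T.map (Submodule.subtype _), hS, hc, he, hspan,
      .congr (T.equivMapOfInjective _ (Submodule.subtype_injective _)).symm, ?_⟩
    rintro _ ⟨t, -, rfl⟩
    obtain ⟨a, ha⟩ := Ideal.mem_span_singleton'.1 t.2
    show (t : A) * e = t
    rw [← ha, mul_assoc, he.eq]
  choose S e T hS hc he hspan hT hTe using data
  have hemb : ∀ c, ∃ S' : Submodule A (A ⧸ Ring.jacobson A), Nonempty (S' ≃ₗ[A] T c) := by
    intro c
    have := hT c
    exact simple_embeds_quot _
  choose S' hS' using hemb
  have hSimp : ∀ c, IsSimpleModule A (S' c) := fun c => by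
    have := hT c
    exact .congr (hS' c).some
  let σ : isotypicComponents A (A ⧸ Ring.jacobson A) →
      isotypicComponents A (A ⧸ Ring.jacobson A) :=
    fun c => ⟨_, S' c, hSimp c, rfl⟩
  have isoOfEq : ∀ (S₁ S₂ : Submodule A (A ⧸ Ring.jacobson A)), IsSimpleModule A S₁ →
      IsSimpleModule A S₂ → isotypicComponent A (A ⧸ Ring.jacobson A) S₁ =
      isotypicComponent A (A ⧸ Ring.jacobson A) S₂ → Nonempty (S₁ ≃ₗ[A] S₂) := by
    intro S₁ S₂ h₁ h₂ h
    exact isIsotypicOfType_submodule_iff.mp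
      (.isotypicComponent A (A ⧸ Ring.jacobson A) S₂) S₁ (h ▸ S₁.le_isotypicComponent)
  have hσ : Function.Injective σ := by
    intro c c' hcc
    obtain ⟨i⟩ := isoOfEq _ _ (hSimp c) (hSimp c') (congrArg Subtype.val hcc)
    let φ : T c ≃ₗ[A] T c' := ((hS' c).some.symm.trans i).trans (hS' c').some
    obtain ⟨a, ha⟩ := hext (T c) ((T c').subtype ∘ₗ φ.toLinearMap)
    obtain ⟨b, hb⟩ := hext (T c') ((T c).subtype ∘ₗ φ.symm.toLinearMap)
    have hTc := hT c
    have := IsSimpleModule.nontrivial A (T c)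
    obtain ⟨t, ht⟩ := exists_ne (0 : T c)
    have h1 : ((φ t : T c') : A) = t * a := ha t
    have h2 : (t : A) = (φ t : T c') * b := by simpa using hb (φ t)
    have h3 : ((φ t : T c') : A) * e c' = φ t := hTe c' _ (φ t).2
    have h4 : (t : A) * e c = t := hTe c _ t.2
    have hnot : e c * (a * e c') ∉ Ring.jacobson A := by
      intro hmem
      have hr : e c * (a * e c') * b ∈ Ring.jacobson A := Ideal.mul_mem_right _ _ hmem
      have h5 : (t : A) * (e c * (a * e c') * b) = t := by
        calc (t : A) * (e c * (a * e c') * b) = ((t * e c) * a * e c') * b := by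
              simp only [mul_assoc]
          _ = t := by rw [h4, ← h1, h3, ← h2]
      obtain ⟨n, hn⟩ := nil_of_mem hr
      have h6 : ∀ n : ℕ, (t : A) * (e c * (a * e c') * b) ^ n = t := by
        intro n
        induction n with
        | zero => simp
        | succ n ih => rw [pow_succ, ← mul_assoc, ih, h5]
      have := h6 n
      rw [hn, mul_zero] at this
      exact ht (Subtype.ext this.symm)
    -- right multiplication on the quotient
    let ρ : (A ⧸ Ring.jacobson A) →ₗ[A] (A ⧸ Ring.jacobson A) :=
      (Ring.jacobson A).mapQ (Ring.jacobson A) (LinearMap.toSpanSingleton A A (a * e c'))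
        (fun x hx => Ideal.mul_mem_right _ _ hx)
    have hρ : ∀ x : A, ρ (Submodule.Quotient.mk x) = Submodule.Quotient.mk (x * (a * e c')) :=
      fun x => rfl
    have hmaps : ∀ x ∈ S c, ρ x ∈ S c' := by
      intro x _
      obtain ⟨x, rfl⟩ := Submodule.Quotient.mk_surjective _ x
      rw [hρ, ← hspan c', ← mul_assoc, ← smul_eq_mul, Submodule.Quotient.mk_smul]
      exact Submodule.smul_mem _ _ (Submodule.mem_span_singleton_self _)
    have hs := hS c
    have hs' := hS c'
    have hne : ρ.restrict hmaps ≠ 0 := by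
      intro h0
      have hmem : (Submodule.Quotient.mk (e c) : A ⧸ Ring.jacobson A) ∈ S c := by
        rw [← hspan c]; exact Submodule.mem_span_singleton_self _
      have := congrArg Subtype.val (LinearMap.congr_fun h0 ⟨_, hmem⟩)
      have h7 : ρ (Submodule.Quotient.mk (e c)) = 0 := this
      rw [hρ] at h7
      exact hnot ((Submodule.Quotient.mk_eq_zero _).1 h7)
    have ebij := LinearEquiv.ofBijective _ (LinearMap.bijective_of_ne_zero hne)
    apply Subtype.ext
    rw [hc c, hc c']
    exact ebij.isotypicComponent_eq
  have hfin : Finite (isotypicComponents A (A ⧸ Ring.jacobson A)) := inferInstance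
  have hsurj := Finite.surjective_of_injective hσ
  obtain ⟨S₀, ⟨e₀⟩⟩ := simple_embeds_quot (A := A) U
  have hS₀ : IsSimpleModule A S₀ := .congr e₀
  obtain ⟨c, hc₀⟩ := hsurj ⟨_, S₀, hS₀, rfl⟩
  obtain ⟨i⟩ := isoOfEq _ _ hS₀ (hSimp c) (congrArg Subtype.val hc₀).symm
  let φ : U ≃ₗ[A] T c := (e₀.symm.trans i).trans (hS' c).some
  refine ⟨(T c).subtype ∘ₗ φ.toLinearMap, fun h0 => ?_⟩
  have := IsSimpleModule.nontrivial A U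
  obtain ⟨x, hx⟩ := exists_ne (0 : U)
  have h1 : ((φ x : T c) : A) = 0 := LinearMap.congr_fun h0 x
  exact hx (by simpa using h1)

end prelim

section count
variable {K : Type u} [Field K] {A : Type v} [Ring A] [Algebra K A]

theorem rank_simple_le (hdim : Module.rank K (A ⧸ Ring.jacobson A) ≤ ℵ₀)
    (U : Type v) [AddCommGroup U] [Module A U] [Module K U] [IsScalarTower K A U]
    [IsSimpleModule A U] : Module.rank K U ≤ ℵ₀ := by
  have := IsSimpleModule.nontrivial A U
  obtain ⟨x, hx⟩ := exists_ne (0 : U)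
  have hle : Ring.jacobson A ≤ LinearMap.ker (LinearMap.toSpanSingleton A U x) :=
    fun r hr => by
      have := IsSemisimpleModule.jacobson_le_annihilator A U hr
      simpa using Module.mem_annihilator.1 this x
  let f := (Ring.jacobson A).liftQ (LinearMap.toSpanSingleton A U x) hle
  have hf : Function.Surjective f := by
    intro y
    obtain ⟨a, ha⟩ := IsSimpleModule.toSpanSingleton_surjective A hx y
    exact ⟨Submodule.Quotient.mk a, ha⟩
  exact (LinearMap.rank_le_of_surjective (f.restrictScalars K) hf).trans hdim

theorem core [IsSemiprimaryRing A] (hinj : Module.Injective A A)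
    (hdim : Module.rank K (A ⧸ Ring.jacobson A) ≤ ℵ₀)
    (M : Type v) [AddCommGroup M] [Module A M] [Module K M] [IsScalarTower K A M]
    [IsSemisimpleModule A M] (hfin : ¬ Module.Finite A M) :
    ℵ₀ < Module.rank K (M →ₗ[A] A) ∧ Module.rank K M < Module.rank K (M →ₗ[A] A) := by
  classical
  obtain ⟨s, e, hs⟩ := isSemisimpleModule_iff_exists_linearEquiv_dfinsupp.mp
    (inferInstance : IsSemisimpleModule A M)
  have hinf : Infinite s := by
    by_contra hcon
    rw [not_infinite_iff_finite] at hcon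
    have := Fintype.ofFinite s
    apply hfin
    have : ∀ i : s, Module.Finite A i.1 := fun i => inferInstance
    exact Module.Finite.equiv e.symm
  have hM : Module.rank K M ≤ #s := by
    have e' := e.restrictScalars K
    rw [e'.rank_eq]
    have h1 := rank_directSum (R := K) (fun i : s => i.1)
    refine h1.le.trans ?_
    refine (Cardinal.sum_le_sum _ (fun _ => ℵ₀) (fun i => rank_simple_le hdim _)).trans ?_
    rw [Cardinal.sum_const]
    simp
  have hH : #s < Module.rank K (M →ₗ[A] A) := by
    choose φ hφ using fun i : s => kasch hinj (i.1)
    let G : (s → K) → ((Π₀ i : s, i.1) →ₗ[A] A) :=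
      fun c => DFinsupp.lsum ℕ (fun i => c i • φ i)
    have hG : ∀ c i x, G c (DFinsupp.single i x) = c i • φ i x := by
      intro c i x
      simp [G]
    let F : (s → K) →ₗ[K] (M →ₗ[A] A) :=
      { toFun := fun c => G c ∘ₗ e.toLinearMap
        map_add' := by
          intro c d
          rw [← LinearMap.add_comp]
          congr 1
          refine DFinsupp.lhom_ext fun i x => ?_
          rw [LinearMap.add_apply, hG, hG, hG, Pi.add_apply, add_smul]
        map_smul' := by
          intro k c
          rw [RingHom.id_apply, ← LinearMap.smul_comp]
          congr 1
          refine DFinsupp.lhom_ext fun i x => ?_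
          rw [LinearMap.smul_apply, hG, hG, Pi.smul_apply, smul_assoc] }
    have hF : Function.Injective F := by
      rw [injective_iff_map_eq_zero]
      intro c hc
      funext i
      by_contra hne
      apply hφ i
      ext x
      have h1 : G c (e (e.symm (DFinsupp.single i x))) = 0 :=
        LinearMap.congr_fun hc (e.symm (DFinsupp.single i x))
      rw [e.apply_symm_apply, hG] at h1
      exact (smul_eq_zero.1 h1).resolve_left hne
    have h1 := LinearMap.lift_rank_le_of_injective F hF
    rw [rank_fun_infinite] at h1
    have hl : ∀ c : Cardinal.{v}, Cardinal.lift.{max u v, v} c = Cardinal.lift.{u, v} c :=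
      fun c => congrFun Cardinal.lift_umax.{v, u} c
    have h2 : lift.{u} #s < #(s → K) := by
      have h3 : lift.{u} #(Set s) ≤ #(s → K) := by
        have : Function.Injective (fun (t : Set s) (i : s) => if i ∈ t then (1 : K) else 0) := by
          intro t t' h
          ext i
          have := congrFun h i
          by_cases h1 : i ∈ t <;> by_cases h2 : i ∈ t' <;> simp_all
        have h5 := Cardinal.lift_mk_le_lift_mk_of_injective this
        simpa [hl] using h5
      refine lt_of_lt_of_le ?_ h3
      rw [Cardinal.lift_lt, Cardinal.mk_set]
      exact Cardinal.cantor _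
    have h4 : lift.{u} #s < lift.{u} (Module.rank K (M →ₗ[A] A)) := by
      refine h2.trans_le ?_
      simpa [hl] using h1
    exact Cardinal.lift_lt.1 h4
  exact ⟨(Cardinal.aleph0_le_mk s).trans_lt hH, hM.trans_lt hH⟩

theorem rank_submodule_quot (M : Type v) [AddCommGroup M] [Module A M] [Module K M]
    [IsScalarTower K A M] (N : Submodule A M) :
    Module.rank K (M ⧸ N) + Module.rank K N = Module.rank K M :=
  Submodule.rank_quotient_add_rank (N.restrictScalars K)

theorem hom_sub (hinj : Module.Injective A A) (M : Type v) [AddCommGroup M] [Module A M]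
    (N : Submodule A M) : Module.rank K (N →ₗ[A] A) ≤ Module.rank K (M →ₗ[A] A) := by
  let f : (M →ₗ[A] A) →ₗ[K] (N →ₗ[A] A) :=
    { toFun := fun g => g ∘ₗ N.subtype
      map_add' := fun _ _ => rfl
      map_smul' := fun _ _ => rfl }
  refine LinearMap.rank_le_of_surjective f fun g => ?_
  obtain ⟨h, hh⟩ := hinj.out N.subtype N.subtype_injective g
  exact ⟨h, LinearMap.ext hh⟩

theorem hom_quot (M : Type v) [AddCommGroup M] [Module A M]
    (N : Submodule A M) : Module.rank K ((M ⧸ N) →ₗ[A] A) ≤ Module.rank K (M →ₗ[A] A) := by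
  let f : ((M ⧸ N) →ₗ[A] A) →ₗ[K] (M →ₗ[A] A) :=
    { toFun := fun g => g ∘ₗ N.mkQ
      map_add' := fun _ _ => rfl
      map_smul' := fun _ _ => rfl }
  refine LinearMap.rank_le_of_injective f fun g h hgh => ?_
  ext x
  exact LinearMap.congr_fun hgh x

theorem hom_self : Module.rank K (A →ₗ[A] A) ≤ Module.rank K A := by
  let f : (A →ₗ[A] A) →ₗ[K] A :=
    { toFun := fun g => g 1
      map_add' := fun _ _ => rfl
      map_smul' := fun _ _ => rfl }
  exact LinearMap.rank_le_of_injective f fun g h hgh => LinearMap.ext_ring hgh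

theorem isArtinianRing_of [IsSemiprimaryRing A] (hinj : Module.Injective A A)
    (hdim : Module.rank K (A ⧸ Ring.jacobson A) ≤ ℵ₀) : IsArtinianRing A := by
  have hcount : Module.rank K A ≤ ℵ₀ := by
    by_contra hcon
    rw [not_le] at hcon
    have key : Module.rank K (A →ₗ[A] A) ≤ Module.rank K A → Module.rank K A < Module.rank K A := by
      refine IsSemiprimaryRing.induction K A A
        (P := fun M => Module.rank K (M →ₗ[A] A) ≤ Module.rank K A →
          Module.rank K M < Module.rank K A) ?_ ?_
      · intro M _ _ _ _ _ _ hM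
        by_cases hfin : Module.Finite A M
        · refine lt_of_le_of_lt ?_ hcon
          obtain ⟨n, S, e, hS⟩ := IsSemisimpleModule.exists_linearEquiv_fin_dfinsupp A M
          have e' := e.restrictScalars K
          rw [e'.rank_eq]
          refine (rank_directSum (R := K) (fun i => S i)).le.trans ?_
          refine (Cardinal.sum_le_sum _ (fun _ => ℵ₀) (fun i => rank_simple_le hdim _)).trans ?_
          rw [Cardinal.sum_const]
          simpa using Cardinal.mul_le_of_le le_rfl (Cardinal.natCast_le_aleph0 (n := n)) le_rfl
        · exact (core hinj hdim M hfin).2.trans_le hM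
      · intro M _ _ _ _ N hN hQ hM
        rw [← rank_submodule_quot (K := K) M N]
        exact Cardinal.add_lt_of_lt hcon.le (hQ ((hom_quot M N).trans hM))
          (hN ((hom_sub hinj M N).trans hM))
    exact lt_irrefl _ (key hom_self)
  have key : Module.rank K (A →ₗ[A] A) ≤ ℵ₀ → IsArtinian A A := by
    refine IsSemiprimaryRing.induction K A A
        (P := fun M => Module.rank K (M →ₗ[A] A) ≤ ℵ₀ → IsArtinian A M) ?_ ?_
    · intro M _ _ _ _ _ _ hM
      by_contra h
      have hfin : ¬ Module.Finite A M := fun hf =>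
        h ((IsSemisimpleModule.finite_tfae (R := A) (M := M).out 0 2).1 hf)
      exact absurd hM (core hinj hdim M hfin).1.not_ge
    · intro M _ _ _ _ N hN hQ hM
      exact (isArtinian_iff_submodule_quotient N).2
        ⟨hN ((hom_sub hinj M N).trans hM), hQ ((hom_quot M N).trans hM)⟩
  exact key (hom_self.trans hcount)

end count
end FaithQF

/-- A semiprimary left self-injective `K`-algebra `A` such that `A / Jac(A)` has at most
countable dimension over `K` is quasi-Frobenius. -/
theorem faith_qf_of_countable_rank_semisimple_quotient
    (K : Type*) [Field K] (A : Type*) [Ring A] [Algebra K A]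
    (hsp : IsSemiprimary A) (hinj : Module.Injective A A)
    (hdim : Module.rank K (A ⧸ Ideal.jacobson (⊥ : Ideal A)) ≤ ℵ₀) :
    IsQuasiFrobenius A := by
  have h1 : IsSemiprimaryRing A := FaithQF.isSemiprimaryRing_of hsp.1 hsp.2
  rw [Ideal.jacobson_bot] at hdim
  exact ⟨hinj, FaithQF.isArtinianRing_of hinj hdim⟩
end

section
/- A left self-injective semiprimary ring A whose quotient A/Jac(A) has cardinality at most ℵ₀ is quasi-Frobenius. -/
open Cardinal

theorem faithAux_simple {A : Type*} [Ring A] [IsSemiprimaryRing A] (M : Type*) [AddCommGroup M]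
    [Module A M] : Nontrivial M → ∃ m : Submodule A M, IsSimpleModule A m := by
  refine IsSemiprimaryRing.induction A A M
    (P := fun M ↦ Nontrivial M → ∃ m : Submodule A M, IsSimpleModule A m) ?_ ?_
  · intro M _ _ _ _ _ _ _
    exact IsSemisimpleModule.exists_simple_submodule A M
  · intro M _ _ _ _ N hN hQ hM
    by_cases h : N = ⊥
    · have : Nontrivial (M ⧸ N) := by
        rw [h]; exact (Submodule.quotEquivOfEqBot (⊥ : Submodule A M) rfl).toEquiv.nontrivial
      obtain ⟨m, hm⟩ := hQ this
      let e : (M ⧸ N) ≃ₗ[A] M := Submodule.quotEquivOfEqBot N h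
      exact ⟨m.map e.toLinearMap, (IsSimpleModule.congr (e.submoduleMap m).symm)⟩
    · obtain ⟨m, hm⟩ := hN ((Submodule.nontrivial_iff_ne_bot).2 h)
      exact ⟨m.map N.subtype,
        (IsSimpleModule.congr (Submodule.equivMapOfInjective N.subtype N.injective_subtype m).symm)⟩

/-- `u` generates a minimal left ideal. -/
def FaithMin {A : Type*} [Ring A] (u : A) : Prop := IsSimpleModule A (Submodule.span A {u})

theorem FaithMin.ne_zero {A : Type*} [Ring A] {u : A} (h : FaithMin u) : u ≠ 0 := by
  rintro rfl
  have : IsSimpleModule A (Submodule.span A {(0:A)}) := h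
  have := IsSimpleModule.nontrivial A (Submodule.span A {(0:A)})
  rw [Submodule.nontrivial_iff_ne_bot] at this
  simp at this

theorem faithMin_exists {A : Type*} [Ring A] [IsSemiprimaryRing A] (I : Ideal A) (hI : I ≠ ⊥) :
    ∃ u ∈ I, FaithMin u := by
  obtain ⟨m, hm⟩ := faithAux_simple (A := A) I ((Submodule.nontrivial_iff_ne_bot).2 hI)
  have := IsSimpleModule.nontrivial A m
  obtain ⟨x, hx⟩ := exists_ne (0 : m)
  refine ⟨x.1.1, x.1.2, ?_⟩
  have h1 := IsSimpleModule.span_singleton_eq_top A hx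
  let f : m →ₗ[A] A := I.subtype ∘ₗ m.subtype
  have hf : Function.Injective f := I.injective_subtype.comp m.injective_subtype
  have h2 : Submodule.span A {(x.1.1 : A)} = (⊤ : Submodule A m).map f := by
    rw [← h1, Submodule.map_span, Set.image_singleton]; rfl
  unfold FaithMin
  rw [h2]
  exact IsSimpleModule.congr ((Submodule.equivMapOfInjective f hf ⊤).symm.trans Submodule.topEquiv)

/-- extending homs from left ideals by right multiplication -/
theorem faith_ext {A : Type*} [Ring A] (hinj : Module.Injective A A) (I : Ideal A)
    (f : I →ₗ[A] A) : ∃ b : A, ∀ x : I, f x = x.1 * b := by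
  obtain ⟨h, hh⟩ := hinj.out I.subtype I.injective_subtype f
  refine ⟨h 1, fun x ↦ ?_⟩
  rw [← hh x, ← smul_eq_mul, ← map_smul]; simp

theorem FaithMin.mul_right {A : Type*} [Ring A] {u : A} (h : FaithMin u) {a : A}
    (ha : u * a ≠ 0) : FaithMin (u * a) := by
  have : IsSimpleModule A (Submodule.span A {u}) := h
  let f : Submodule.span A {u} →ₗ[A] A := (LinearMap.toSpanSingleton A A a) ∘ₗ Submodule.subtype _
  have hf : f ≠ 0 := fun h0 ↦ ha (by
    simpa [f] using congrArg (fun g ↦ g ⟨u, Submodule.mem_span_singleton_self u⟩) h0)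
  have hfi := LinearMap.injective_of_ne_zero hf
  have h2 : Submodule.span A {u * a} = LinearMap.range f := by
    rw [LinearMap.range_comp, Submodule.range_subtype, Submodule.map_span, Set.image_singleton]
    simp
  unfold FaithMin
  rw [h2]
  exact IsSimpleModule.congr (LinearEquiv.ofInjective f hfi).symm

theorem FaithMin.mul_inv {A : Type*} [Ring A] (hinj : Module.Injective A A)
    {u : A} (h : FaithMin u) {a : A} (ha : u * a ≠ 0) : ∃ b, u * a * b = u := by
  have : IsSimpleModule A (Submodule.span A {u}) := h
  let f : Submodule.span A {u} →ₗ[A] A := (LinearMap.toSpanSingleton A A a) ∘ₗ Submodule.subtype _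
  have hf : f ≠ 0 := fun h0 ↦ ha (by
    simpa [f] using congrArg (fun g ↦ g ⟨u, Submodule.mem_span_singleton_self u⟩) h0)
  have hfi := LinearMap.injective_of_ne_zero hf
  let e := LinearEquiv.ofInjective f hfi
  obtain ⟨b, hb⟩ := faith_ext hinj (LinearMap.range f) (Submodule.subtype _ ∘ₗ e.symm.toLinearMap)
  refine ⟨b, ?_⟩
  have := hb (e ⟨u, Submodule.mem_span_singleton_self u⟩)
  simpa [e, f] using this.symm


theorem FaithMin.mul_jac {A : Type*} [Ring A] [IsSemiprimaryRing A] (hinj : Module.Injective A A)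
    {u : A} (h : FaithMin u) {a : A} (ha : a ∈ Ring.jacobson A) : u * a = 0 := by
  by_contra hne
  obtain ⟨b, hb⟩ := h.mul_inv hinj hne
  have hab : a * b ∈ Ring.jacobson A := Ideal.mul_mem_right _ _ ha
  obtain ⟨n, hn⟩ := IsSemiprimaryRing.isNilpotent (R := A)
  have h1 : (a * b) ^ n = 0 := by
    have := Ideal.pow_mem_pow hab n
    rw [hn] at this
    simpa using this
  have h2 : ∀ k, u * (a * b) ^ k = u := by
    intro k
    induction k with
    | zero => simp
    | succ k ih => rw [pow_succ, ← mul_assoc, ih, ← mul_assoc, hb]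
  exact h.ne_zero (by rw [← h2 n, h1, mul_zero])

theorem faith_mem_jac {A : Type*} [Ring A] [IsSemiprimaryRing A] (hinj : Module.Injective A A)
    {a : A} (ha : ∀ s : A, FaithMin s → s * a = 0) : a ∈ Ring.jacobson A := by
  have key : ∀ k : A, (∀ s : A, FaithMin s → s * k = 0) → ∃ c, (1 + k) * c = 1 := by
    intro k hk
    let f : A →ₗ[A] A := LinearMap.toSpanSingleton A A (1 + k)
    have hker : LinearMap.ker f = ⊥ := by
      by_contra hne
      obtain ⟨u, hu, hum⟩ := faithMin_exists _ hne
      have : u * (1 + k) = 0 := by simpa [f] using hu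
      rw [mul_add, hk u hum, mul_one, add_zero] at this
      exact hum.ne_zero this
    obtain ⟨g, hg⟩ := hinj.out f (LinearMap.ker_eq_bot.1 hker) LinearMap.id
    refine ⟨g 1, ?_⟩
    have := hg 1
    simp only [f, LinearMap.toSpanSingleton_apply, LinearMap.id_apply, one_smul] at this
    rw [← smul_eq_mul, ← map_smul]
    simpa using this
  rw [← Ideal.jacobson_bot, Ideal.mem_jacobson_iff]
  intro y
  have hya : ∀ z s : A, FaithMin s → s * (y * a * z) = 0 := by
    intro z s hs
    by_cases h0 : s * y = 0
    · simp [← mul_assoc, h0]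
    · rw [← mul_assoc, ← mul_assoc, ha _ (hs.mul_right h0), zero_mul]
  obtain ⟨c, hc⟩ := key (y * a) (by simpa using hya 1)
  have hc' : c = 1 + y * a * (-c) := by
    have : c + y * a * c = 1 := by rw [← hc]; noncomm_ring
    rw [← this]; noncomm_ring
  obtain ⟨d, hd⟩ := key (y * a * (-c)) (hya _)
  rw [← hc'] at hd
  have hd' : d = 1 + y * a := by
    calc d = ((1 + y * a) * c) * d := by rw [hc, one_mul]
      _ = (1 + y * a) * (c * d) := mul_assoc _ _ _
      _ = _ := by rw [hd, mul_one]
  refine ⟨c, ?_⟩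
  rw [hd'] at hd
  have : c * y * a + c - 1 = 0 := by
    rw [sub_eq_zero, ← hd]; noncomm_ring
  simp [this]

theorem faith_ss_quot {A : Type*} [Ring A] [IsSemiprimaryRing A] :
    IsSemisimpleModule A (A ⧸ Ring.jacobson A) := by
  let e : A ⧸ Ring.jacobson A →ₛₗ[Ideal.Quotient.mk (Ring.jacobson A)] A ⧸ Ring.jacobson A :=
    ⟨.id _, fun _ _ ↦ rfl⟩
  exact (e.isSemisimpleModule_iff_of_bijective Function.bijective_id).2 inferInstance

theorem faith_embed {A : Type*} [Ring A] [IsSemiprimaryRing A] (T : Type*) [AddCommGroup T]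
    [Module A T] [IsSimpleModule A T] :
    ∃ m : Submodule A (A ⧸ Ring.jacobson A), Nonempty (T ≃ₗ[A] m) := by
  have := faith_ss_quot (A := A)
  have := IsSimpleModule.nontrivial A T
  obtain ⟨t, ht⟩ := exists_ne (0 : T)
  let f : A ⧸ Ring.jacobson A →ₗ[A] T := (Ring.jacobson A).liftQ (LinearMap.toSpanSingleton A T t)
    (by
      intro x hx
      have := IsSemisimpleModule.jacobson_le_annihilator A T hx
      simpa using Module.mem_annihilator.1 this t)
  have hf : f ≠ 0 := by
    intro h
    apply ht
    have h1 : f (Submodule.Quotient.mk 1) = 0 := by rw [h]; rfl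
    rw [Submodule.liftQ_apply] at h1
    simpa using h1
  exact LinearMap.linearEquiv_of_ne_zero hf

theorem faith_kasch {A : Type*} [Ring A] [IsSemiprimaryRing A] (hinj : Module.Injective A A)
    (T : Type*) [AddCommGroup T] [Module A T] [IsSimpleModule A T] :
    ∃ f : T →ₗ[A] A, f ≠ 0 := by
  classical
  have := faith_ss_quot (A := A)
  let Q := A ⧸ Ring.jacobson A
  let π : A →ₗ[A] Q := (Ring.jacobson A).mkQ
  let X := isotypicComponents A Q
  have hπ : ∀ a : A, π a = 0 ↔ a ∈ Ring.jacobson A := fun a ↦ Submodule.Quotient.mk_eq_zero _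
  -- components are closed under right multiplication
  have hright : ∀ c ∈ X, ∀ a b : A, π a ∈ c → π (a * b) ∈ c := by
    intro c hc a b hab
    let r : Q →ₗ[A] Q := (Ring.jacobson A).mapQ (Ring.jacobson A)
      (LinearMap.toSpanSingleton A A b) (by
        intro x hx
        simpa using Ideal.mul_mem_right _ _ hx)
    have := Submodule.IsFullyInvariant.of_mem_isotypicComponents hc r hab
    exact this
  have hdisj : ∀ c ∈ X, ∀ c' ∈ X, c ≠ c' → c ⊓ c' = ⊥ := fun c hc c' hc' hne ↦
    ((sSupIndep_isotypicComponents A Q).pairwiseDisjoint hc hc' hne).eq_bot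
  -- choose minimal elements
  have hex : ∀ c : X, ∃ u : A, FaithMin u ∧ ∀ c' ∈ X, c' ≠ c → ∀ a, π a ∈ c' → u * a = 0 := by
    rintro ⟨c, hc⟩
    obtain ⟨q, hq, hq0⟩ := Submodule.exists_mem_ne_zero_of_ne_bot (bot_lt_isotypicComponents hc).ne'
    obtain ⟨a, rfl⟩ := Submodule.mkQ_surjective _ q
    have haJ : a ∉ Ring.jacobson A := fun h ↦ hq0 ((hπ a).2 h)
    have : ∃ s : A, FaithMin s ∧ s * a ≠ 0 := by
      by_contra! hcon
      exact haJ (faith_mem_jac hinj hcon)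
    obtain ⟨s, hs, hsa⟩ := this
    refine ⟨s * a, hs.mul_right hsa, fun c' hc' hne a' ha' ↦ ?_⟩
    rw [mul_assoc]
    apply hs.mul_jac hinj
    have h1 : π (a * a') ∈ c := hright c hc _ _ hq
    have h2 : π (a * a') ∈ c' := by
      rw [← smul_eq_mul, map_smul]; exact c'.smul_mem _ ha'
    have h3 : π (a * a') ∈ c ⊓ c' := ⟨h1, h2⟩
    rw [hdisj c hc c' hc' (Ne.symm hne)] at h3
    exact (hπ _).1 h3
  choose u hu hu' using hex
  have hsimp : ∀ c, IsSimpleModule A (Submodule.span A {u c}) := hu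
  have hemb := fun c ↦ faith_embed (A := A) (Submodule.span A {u c})
  choose m hm using hemb
  have hmsimp : ∀ c, IsSimpleModule A (m c) := fun c ↦ IsSimpleModule.congr (hm c).some.symm
  let ψ : X → X := fun c ↦ ⟨isotypicComponent A Q (m c), m c, hmsimp c, rfl⟩
  -- equal components give isomorphic modules
  have hiso : ∀ S S' : Submodule A Q, IsSimpleModule A S → IsSimpleModule A S' →
      isotypicComponent A Q S = isotypicComponent A Q S' → Nonempty (S ≃ₗ[A] S') := by
    intro S S' hS hS' h
    have h1 := IsIsotypicOfType.isotypicComponent A Q S'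
    rw [isIsotypicOfType_submodule_iff] at h1
    exact h1 S (h ▸ S.le_isotypicComponent)
  have hψ : Function.Injective ψ := by
    intro c c' h
    by_contra hne
    obtain ⟨e0⟩ := hiso _ _ (hmsimp c) (hmsimp c') (congrArg Subtype.val h)
    let e := (hm c).some.trans (e0.trans (hm c').some.symm)
    obtain ⟨b, hb⟩ := faith_ext hinj _ (Submodule.subtype _ ∘ₗ e.toLinearMap)
    let y := e.symm ⟨u c', Submodule.mem_span_singleton_self _⟩
    obtain ⟨r, hr⟩ := Submodule.mem_span_singleton.1 y.2
    have huc : u c' = r * u c * b := by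
      have := hb y
      simp only [y, LinearMap.comp_apply, LinearEquiv.coe_coe, LinearEquiv.apply_symm_apply,
        Submodule.subtype_apply] at this
      rw [this, ← smul_eq_mul r, hr]
    have hz : ∀ c'' ∈ X, ∀ a, π a ∈ c'' → u c' * a = 0 := by
      intro c'' hc'' a ha
      by_cases h1 : c'' = c'.1
      · have h2 : c'' ≠ c.1 := fun h3 ↦ hne (Subtype.ext (h3.symm.trans h1))
        have h4 : π (b * a) ∈ c'' := by
          rw [← smul_eq_mul, map_smul]; exact c''.smul_mem _ ha
        rw [huc, mul_assoc, mul_assoc, hu' c c'' hc'' h2 _ h4, mul_zero]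
      · exact hu' c' c'' hc'' h1 a ha
    have hall : ∀ q : Q, ∀ a, π a = q → u c' * a = 0 := by
      intro q
      have hq : q ∈ ⨆ c : X, c.1 := by
        rw [← sSup_eq_iSup', sSup_isotypicComponents]; trivial
      induction hq using Submodule.iSup_induction' with
      | mem i x hx => intro a ha; exact hz i.1 i.2 a (ha ▸ hx)
      | zero => intro a ha; exact (hu c').mul_jac hinj ((hπ a).1 ha)
      | add x y _ _ hx hy =>
        intro a ha
        obtain ⟨a1, h1⟩ := Submodule.mkQ_surjective _ x
        have h2 : π (a - a1) = y := by rw [map_sub, ha, show π a1 = x from h1, add_sub_cancel_left]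
        have := hx a1 h1
        have h3 := hy _ h2
        rw [mul_sub, this, sub_zero] at h3
        exact h3
    exact (hu c').ne_zero (by simpa using hall _ 1 rfl)
  have hfin : Finite X := inferInstanceAs (Finite (isotypicComponents A Q))
  have hsurj := Finite.surjective_of_injective hψ
  obtain ⟨t, ⟨et⟩⟩ := faith_embed (A := A) T
  have ht : IsSimpleModule A t := IsSimpleModule.congr et.symm
  obtain ⟨c, hc⟩ := hsurj ⟨isotypicComponent A Q t, t, ht, rfl⟩
  obtain ⟨e0⟩ := hiso _ _ ht (hmsimp c) (congrArg Subtype.val hc).symm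
  let e := et.trans (e0.trans (hm c).some.symm)
  refine ⟨Submodule.subtype _ ∘ₗ e.toLinearMap, fun h0 ↦ (hu c).ne_zero ?_⟩
  have := congrArg (fun g ↦ g (e.symm ⟨u c, Submodule.mem_span_singleton_self _⟩)) h0
  simpa using this


theorem faith_nakayama {A : Type*} [Ring A] {M : Type*} [AddCommGroup M] [Module A M]
    (J : Ideal A) (hJ : IsNilpotent J) (N : Submodule A M)
    (h : N ⊔ J • (⊤ : Submodule A M) = ⊤) : N = ⊤ := by
  have key : ∀ k : ℕ, N ⊔ (J ^ k) • (⊤ : Submodule A M) = ⊤ := by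
    intro k
    induction k with
    | zero => simp [Submodule.pow_zero]
    | succ k ih =>
      rw [eq_top_iff]
      calc (⊤ : Submodule A M) = N ⊔ J ^ k • (N ⊔ J • (⊤ : Submodule A M)) := by rw [h, ih]
        _ ≤ _ := by
          rw [Submodule.smul_sup, Submodule.pow_succ, Submodule.mul_smul]
          refine sup_le le_sup_left (sup_le (Submodule.smul_le_right.trans le_sup_left) le_sup_right)
  obtain ⟨n, hn⟩ := hJ
  have := key n
  rw [hn] at this
  simpa using this

theorem faith_core {A : Type*} [Ring A] [IsSemiprimaryRing A] (hinj : Module.Injective A A)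
    (hcard : #(A ⧸ Ring.jacobson A) ≤ ℵ₀) : (Ring.jacobson A).FG := by
  classical
  let J := Ring.jacobson A
  let K : Submodule A J := J • ⊤
  let V := J ⧸ K
  have htor : Module.IsTorsionBySet A V (Ring.jacobson A) := by
    rw [Module.isTorsionBySet_quotient_iff]
    exact fun m i hi ↦ Submodule.smul_mem_smul hi trivial
  have hss : IsSemisimpleModule A V := by
    let _ := htor.module
    exact (htor.semilinearMap.isSemisimpleModule_iff_of_bijective Function.bijective_id).2
      inferInstance
  obtain ⟨s, e, -, hsim⟩ := IsSemisimpleModule.exists_linearEquiv_dfinsupp A V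
  have hnt : ∀ i : s, ∃ t : i.1, t ≠ 0 := fun i ↦ by
    have := IsSimpleModule.nontrivial A i.1
    exact exists_ne 0
  choose t ht using hnt
  have hx : ∀ i : s, ∃ x : J, K.mkQ x = e.symm (DFinsupp.single i (t i)) := fun i ↦
    Submodule.mkQ_surjective _ _
  choose x hx using hx
  have hN : Submodule.span A (Set.range x) = ⊤ := by
    apply faith_nakayama J IsSemiprimaryRing.isNilpotent
    have h1 : (Submodule.span A (Set.range x)).map (e.toLinearMap ∘ₗ K.mkQ) = ⊤ := by
      rw [eq_top_iff]
      rintro y -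
      induction y using DFinsupp.induction with
      | h0 => exact zero_mem _
      | ha i b f _ _ hf =>
        refine add_mem ?_ hf
        have hb : b ∈ Submodule.span A {t i} := by
          rw [IsSimpleModule.span_singleton_eq_top A (ht i)]; trivial
        obtain ⟨a, rfl⟩ := Submodule.mem_span_singleton.1 hb
        refine ⟨a • x i, Submodule.smul_mem _ _ (Submodule.subset_span ⟨i, rfl⟩), ?_⟩
        rw [map_smul, LinearMap.comp_apply, hx i]
        simp
    have h2 := congrArg (Submodule.comap (e.toLinearMap ∘ₗ K.mkQ)) h1
    rw [Submodule.comap_map_eq, Submodule.comap_top, LinearEquiv.ker_comp, Submodule.ker_mkQ] at h2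
    exact h2
  have hJ : J = Submodule.span A (Set.range fun i ↦ (x i : A)) := by
    have := congrArg (Submodule.map J.subtype) hN
    rw [Submodule.map_span, Submodule.map_top, Submodule.range_subtype, ← Set.range_comp] at this
    exact this.symm
  by_cases hfin : Finite s
  · exact Submodule.fg_def.2 ⟨_, Set.finite_range _, hJ.symm⟩
  exfalso
  rw [not_finite_iff_infinite] at hfin
  -- lower bound
  have hk : ∀ i : s, ∃ f : i.1 →ₗ[A] A, f ≠ 0 := fun i ↦ faith_kasch hinj i.1
  choose f hf using hk
  have hb : ∀ P : Set s, ∃ b : A, ∀ y : J,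
      DFinsupp.lsum ℕ (fun i : s ↦ if i ∈ P then f i else 0) (e (K.mkQ y)) = y.1 * b := fun P ↦
    faith_ext hinj J ((DFinsupp.lsum ℕ (fun i : s ↦ if i ∈ P then f i else 0)) ∘ₗ
      e.toLinearMap ∘ₗ K.mkQ)
  choose b hb using hb
  have hbinj : Function.Injective b := by
    intro P P' hPP
    ext i
    have hfi : ∃ z, f i z ≠ 0 := by
      by_contra! h
      exact hf i (LinearMap.ext h)
    obtain ⟨z, hz⟩ := hfi
    obtain ⟨y, hy⟩ := Submodule.mkQ_surjective K (e.symm (DFinsupp.single i z))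
    have h1 := hb P y
    have h2 := hb P' y
    rw [hPP, ← h2, hy, e.apply_symm_apply] at h1
    by_cases hP : i ∈ P <;> by_cases hP' : i ∈ P' <;> simp_all
  have hlow : 2 ^ #s ≤ #A := by
    rw [← Cardinal.mk_set]
    exact Cardinal.mk_le_of_injective hbinj
  -- upper bound
  let R : Set A := Set.range (Quotient.out : A ⧸ Ring.jacobson A → A)
  let A' := Algebra.adjoin ℤ (R ∪ Set.range fun i ↦ (x i : A))
  have happ : ∀ k : ℕ, ∀ a : A, ∃ a' ∈ A', a - a' ∈ J ^ k := by
    intro k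
    induction k with
    | zero => intro a; exact ⟨0, zero_mem _, by simp [Submodule.pow_zero]⟩
    | succ k ih =>
      have hle : J ^ (k + 1) ≤ J := Ideal.pow_le_self k.succ_ne_zero
      have hJk : ∀ y ∈ Submodule.span A (Set.range fun i ↦ (x i : A)),
          ∃ a' ∈ A', y - a' ∈ J ^ (k + 1) := by
        intro y hy
        induction hy using Submodule.span_induction with
        | mem y h => exact ⟨y, Algebra.subset_adjoin (Or.inr h), by simp⟩
        | zero => exact ⟨0, zero_mem _, by simp⟩
        | add y z _ _ hy hz =>
          obtain ⟨y', h1, h2⟩ := hy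
          obtain ⟨z', h3, h4⟩ := hz
          exact ⟨y' + z', add_mem h1 h3, by rw [add_sub_add_comm]; exact add_mem h2 h4⟩
        | smul c y hyJ hy =>
          rw [← hJ] at hyJ
          obtain ⟨y', h1, h2⟩ := hy
          obtain ⟨c', h3, h4⟩ := ih c
          have hy' : y' ∈ J := by
            have := sub_mem hyJ (hle h2)
            simpa using this
          refine ⟨c' * y', mul_mem h3 h1, ?_⟩
          have : c • y - c' * y' = c * (y - y') + (c - c') * y' := by
            rw [smul_eq_mul]; noncomm_ring
          rw [this]
          refine add_mem (Ideal.mul_mem_left _ _ h2) ?_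
          rw [Submodule.pow_succ]
          exact Ideal.mul_mem_mul h4 hy'
      intro a
      let r : A := Quotient.out (Submodule.Quotient.mk a : A ⧸ Ring.jacobson A)
      have hr : a - r ∈ J := by
        have : (Submodule.Quotient.mk r : A ⧸ Ring.jacobson A) = Submodule.Quotient.mk a :=
          Quotient.out_eq _
        exact (Submodule.Quotient.eq _).1 this.symm
      rw [hJ] at hr
      obtain ⟨a', h1, h2⟩ := hJk _ hr
      exact ⟨r + a', add_mem (Algebra.subset_adjoin (Or.inl ⟨_, rfl⟩)) h1, by
        rwa [← sub_sub]⟩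
  have htop : ∀ a : A, a ∈ A' := by
    intro a
    obtain ⟨n, hn⟩ := IsSemiprimaryRing.isNilpotent (R := A)
    obtain ⟨a', h1, h2⟩ := happ n a
    have h3 : J ^ n = 0 := hn
    rw [h3] at h2
    have : a - a' = 0 := by simpa using h2
    rwa [sub_eq_zero.1 this]
  have hA : #A ≤ #A' := Cardinal.mk_le_of_injective (f := fun a ↦ (⟨a, htop a⟩ : A'))
    fun a b h ↦ congrArg Subtype.val h
  have hinf : ℵ₀ ≤ #s := Cardinal.aleph0_le_mk s
  have hup : #A' ≤ #s := by
    have h := Algebra.lift_cardinalMk_adjoin_le ℤ (R ∪ Set.range fun i ↦ (x i : A))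
    rw [Cardinal.lift_uzero, Cardinal.lift_uzero] at h
    refine h.trans (sup_le (sup_le ?_ ?_) hinf)
    · simpa using hinf
    · refine (Cardinal.mk_union_le _ _).trans ?_
      refine Cardinal.add_le_of_le hinf ?_ Cardinal.mk_range_le
      exact Cardinal.mk_range_le.trans (hcard.trans hinf)
  exact absurd (hlow.trans (hA.trans hup)) (not_le.2 (Cardinal.cantor _))




/-- A left self-injective semiprimary ring `A` with `|A / Jac(A)| ≤ ℵ₀` is quasi-Frobenius. -/
theorem faith_qf_of_countable_card_semisimple_quotient
    (A : Type*) [Ring A]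
    (hsp : IsSemiprimary A) (hinj : Module.Injective A A)
    (hcard : #(A ⧸ Ideal.jacobson (⊥ : Ideal A)) ≤ ℵ₀) :
    IsQuasiFrobenius A := by
  obtain ⟨hss, n, hn0, hn⟩ := hsp
  have hJ := Ideal.jacobson_bot (R := A)
  rw [hJ] at hcard hn
  have hmem : ∀ a : A, a ∈ (⊥ : TwoSidedIdeal A).jacobson ↔ a ∈ Ring.jacobson A := by
    intro a
    rw [← hJ, TwoSidedIdeal.mem_jacobson_iff, Ideal.mem_jacobson_iff]
    rfl
  have hsp : IsSemiprimaryRing A := by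
    refine ⟨?_, n, ?_⟩
    · let g : RingCon.Quotient (⊥ : TwoSidedIdeal A).jacobson.ringCon →+* A ⧸ Ring.jacobson A :=
        RingCon.lift _ (Ideal.Quotient.mk (Ring.jacobson A)) (by
          intro a b hab
          have h1 := (TwoSidedIdeal.rel_iff _ a b).1 hab
          exact Ideal.Quotient.eq.2 ((hmem _).1 h1))
      refine g.isSemisimpleRing_of_surjective ?_
      intro q
      obtain ⟨a, rfl⟩ := Ideal.Quotient.mk_surjective q
      exact ⟨(a : RingCon.Quotient _), rfl⟩
    · have hl : ∀ l : List A, l.length = n → (∀ z ∈ l, z ∈ Ring.jacobson A) → l.prod = 0 := by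
        rintro l rfl hz
        have := hn l.get (fun i ↦ hz _ (List.get_mem l i))
        rwa [List.ofFn_get] at this
      have key : ∀ k : ℕ, ∀ l : List A, k + l.length = n → (∀ z ∈ l, z ∈ Ring.jacobson A) →
          ∀ y ∈ (Ring.jacobson A) ^ k, y * l.prod = 0 := by
        intro k
        induction k with
        | zero => intro l h1 h2 y _; rw [hl l (by omega) h2, mul_zero]
        | succ k ih =>
          intro l h1 h2 y hy
          rw [Submodule.pow_succ] at hy
          refine Submodule.smul_induction_on hy ?_ ?_
          · intro a ha j hj
            rw [smul_eq_mul, mul_assoc, ← List.prod_cons]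
            refine ih (j :: l) (by simp; omega) ?_ a ha
            intro z hz
            rcases List.mem_cons.1 hz with rfl | hz
            · exact hj
            · exact h2 z hz
          · intro y z hy hz
            rw [add_mul, hy, hz, add_zero]
      rw [Submodule.zero_eq_bot, eq_bot_iff]
      intro y hy
      have := key n [] (by simp) (by simp) y hy
      simpa using this
  exact ⟨hinj, IsSemiprimaryRing.isNoetherian_iff_isArtinian.1
    (IsSemiprimaryRing.isNoetherianRing_iff_jacobson_fg.2 (faith_core hinj hcard))⟩
end

section
/- Let A be a left self-injective semiprimary ring and e an idempotent of A such that Ae is an indecomposable left A-module. Then the right A-module eA has a simple socle, which is moreover essential in eA. -/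
universe u

open Cardinal

/-- The socle of a module: the sum of all its simple submodules. -/
def socle (R M : Type*) [Ring R] [AddCommGroup M] [Module R M] : Submodule R M :=
  sSup {N : Submodule R M | IsSimpleModule R N}

/-- A module is *indecomposable* if it is nonzero and is not the direct sum of two
nonzero submodules. -/
def IsIndecomposableModule (R M : Type*) [Ring R] [AddCommGroup M] [Module R M] : Prop :=
  Nontrivial M ∧ ∀ N N' : Submodule R M, IsCompl N N' → N = ⊥ ∨ N' = ⊥

/-- A submodule is *essential* if it intersects every nonzero submodule nontrivially. -/
def IsEssentialSubmodule {R M : Type*} [Ring R] [AddCommGroup M] [Module R M]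
    (N : Submodule R M) : Prop :=
  ∀ P : Submodule R M, N ⊓ P = ⊥ → P = ⊥

theorem sp_left_ideal_idem {R : Type*} [Ring R] [IsSemisimpleRing R] (N : Ideal R) :
    ∃ n ∈ N, ∀ x ∈ N, x * n = x := by
  obtain ⟨N', hN'⟩ := exists_isCompl N
  have h1 : (1 : R) ∈ N ⊔ N' := by rw [hN'.sup_eq_top]; trivial
  obtain ⟨n, hn, n', hn', h⟩ := Submodule.mem_sup.1 h1
  refine ⟨n, hn, fun x hx => ?_⟩
  have h2 : x * n + x * n' = x := by rw [← mul_add, h, mul_one]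
  have h3 : x * n' ∈ N ⊓ N' := by
    refine ⟨?_, N'.mul_mem_left x hn'⟩
    have : x * n' = x - x * n := eq_sub_of_add_eq' h2
    rw [this]
    exact N.sub_mem hx (N.mul_mem_left x hn)
  rw [hN'.inf_eq_bot] at h3
  have h4 : x * n' = 0 := h3
  rw [h4, add_zero] at h2
  exact h2

theorem sp_regular {R : Type*} [Ring R] [IsSemisimpleRing R] (x : R) : ∃ y, x * y * x = x := by
  obtain ⟨n, hn, h⟩ := sp_left_ideal_idem (Ideal.span {x})
  obtain ⟨y, rfl⟩ := Ideal.mem_span_singleton'.1 hn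
  exact ⟨y, by rw [mul_assoc]; exact h x (Ideal.mem_span_singleton_self x)⟩

theorem sp_central {R S : Type*} [Ring R] [IsSemisimpleRing R] [AddCommGroup S] [Module R S] :
    ∃ p : R, (∀ r, p * r = r * p) ∧ p * p = p ∧ (∀ s : S, p • s = s) ∧
      ∀ x : R, (∀ s : S, x • s = 0) → p * x = 0 := by
  obtain ⟨n, hn, h⟩ := sp_left_ideal_idem (Module.annihilator R S)
  rw [Module.mem_annihilator] at hn
  have hN : ∀ x : R, (∀ s : S, x • s = 0) → x * n = x := fun x hx =>
    h x (Module.mem_annihilator.2 hx)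
  have hnr : ∀ r, n * r * n = n * r := fun r => hN _ fun s => by rw [mul_smul, hn]
  have hx : ∀ r, r * n = n * r * n := by
    intro r
    have : (1 - n) * r * n = 0 := by
      obtain ⟨y, hy⟩ := sp_regular ((1 - n) * r * n)
      rw [← hy]
      have h2 : n * y * (1 - n) = 0 := by rw [mul_sub, hnr]; simp
      calc (1 - n) * r * n * y * ((1 - n) * r * n)
          = (1 - n) * r * (n * y * (1 - n)) * r * n := by noncomm_ring
        _ = 0 := by rw [h2]; simp
    have h3 : (1 - n) * r * n = r * n - n * r * n := by noncomm_ring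
    rw [h3] at this
    exact sub_eq_zero.1 this
  have hc : ∀ r, n * r = r * n := fun r => by rw [hx, hnr]
  refine ⟨1 - n, fun r => by rw [sub_mul, mul_sub, hc]; simp, ?_, fun s => by simp [sub_smul, hn],
    fun x hx => ?_⟩
  · have : n * n = n := hN n hn
    simp [mul_sub, sub_mul, this]
  · rw [sub_mul, hc, hN x hx]; simp

theorem sp_density {R S : Type*} [Ring R] [IsSemisimpleRing R] [AddCommGroup S] [Module R S]
    (f : Module.End (Module.End R S) S) : ∃ r : R, ∀ s, f s = r • s := by
  classical
  let g : Finset S → Ideal R := fun F =>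
    ⨅ s ∈ F, LinearMap.ker (LinearMap.toSpanSingleton R S s)
  have hg : ∀ F r, r ∈ g F ↔ ∀ s ∈ F, r • s = 0 := by
    intro F r; simp [g, Submodule.mem_iInf]
  obtain ⟨_, ⟨F, rfl⟩, hF⟩ := (wellFounded_lt (α := Ideal R)).has_min (Set.range g) ⟨_, ∅, rfl⟩
  obtain ⟨r, hr⟩ := jacobson_density f F
  refine ⟨r, fun s => ?_⟩
  obtain ⟨r', hr'⟩ := jacobson_density f (insert s F)
  have h1 : g (insert s F) ≤ g F := by
    intro x hx
    rw [hg] at hx ⊢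
    exact fun t ht => hx t (Finset.mem_insert_of_mem ht)
  have h2 : g (insert s F) = g F := by
    by_contra hne
    exact hF _ ⟨_, rfl⟩ (lt_of_le_of_ne h1 hne)
  have h3 : r - r' ∈ g F := by
    rw [hg]
    intro t ht
    rw [sub_smul, ← hr t ht, ← hr' t (Finset.mem_insert_of_mem ht), sub_self]
  rw [← h2, hg] at h3
  have h4 := h3 s (Finset.mem_insert_self _ _)
  rw [sub_smul, ← hr' s (Finset.mem_insert_self _ _)] at h4
  exact (sub_eq_zero.1 h4).symm

theorem sp_faithful {R S : Type*} [Ring R] [IsSemisimpleRing R] [AddCommGroup S] [Module R S]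
    (m : R → (S →ₗ[R] S)) (hmul : ∀ a b s, m (a * b) s = m b (m a s))
    (hzero : ∀ s, m 0 s = 0)
    (hinj : ∀ r, (∀ s, m r s = 0) → r = 0) (hsurj : ∀ f, ∃ r, f = m r)
    (r : R) (hr : ∀ s : S, r • s = 0) : r = 0 := by
  obtain ⟨p, hpc, hpp, hps, hp⟩ := sp_central (R := R) (S := S)
  by_cases hp1 : p = 1
  · simpa [hp1] using hp r hr
  exfalso
  let C := {q : R // (∀ r, q * r = r * q) ∧ q * q = q ∧ q ≠ 0}
  have step : ∀ w : C, ∃ z : C, p * z.1 = z.1 ∧ ∀ s : S, z.1 • s = m w.1 s := by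
    rintro ⟨w, hwc, hww, hw0⟩
    let f : Module.End (Module.End R S) S :=
      { toFun := m w
        map_add' := fun a b => map_add _ a b
        map_smul' := fun φ s => by
          obtain ⟨a, rfl⟩ := hsurj φ
          simp only [Module.End.smul_def, RingHom.id_apply]
          rw [← hmul, ← hmul, hwc] }
    obtain ⟨z, hz⟩ := sp_density f
    have hz : ∀ s, z • s = m w s := fun s => (hz s).symm
    have hz' : ∀ s, (p * z) • s = m w s := fun s => by rw [mul_smul, hz, hps]
    have key : ∀ x y : R, (∀ s : S, x • s = y • s) → p * x = p * y := fun x y h => by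
      have := hp (x - y) (fun s => by rw [sub_smul, h, sub_self])
      rw [mul_sub] at this
      exact sub_eq_zero.1 this
    refine ⟨⟨p * z, ?_, ?_, ?_⟩, ?_, hz'⟩
    · intro a
      have := key (z * a) (a * z) (fun s => by
        rw [mul_smul, mul_smul, hz, hz, map_smul])
      rw [mul_assoc, this, ← mul_assoc, hpc, mul_assoc]
    · have := key (p * z * (p * z)) (p * z) (fun s => by
        rw [mul_smul, hz', hz', ← hmul, hww])
      have hpz : p * (p * z) = p * z := by rw [← mul_assoc, hpp]
      rw [← mul_assoc p (p * z), hpz] at this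
      exact this
    · intro h0
      apply hw0
      apply hinj
      intro s
      rw [← hz', h0, zero_smul]
    · simp only; rw [← mul_assoc, hpp]
  choose nx hnx1 hnx2 using step
  let q0 : C := ⟨1 - p, fun r => by rw [sub_mul, mul_sub, hpc]; simp,
    by simp [mul_sub, sub_mul, hpp], fun h => hp1 (sub_eq_zero.1 h).symm⟩
  let q : ℕ → C := fun n => nx^[n] q0
  have hq : ∀ n, q (n + 1) = nx (q n) := fun n => Function.iterate_succ_apply' _ _ _
  have horth : ∀ j k, (q (j + k + 1)).1 * (q j).1 = 0 := by
    intro j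
    induction j with
    | zero =>
      intro k
      have h1 : (q 0).1 = 1 - p := rfl
      rw [h1, mul_sub, ← hpc, mul_one, hq, hnx1, sub_self]
    | succ j ih =>
      intro k
      have h := hp ((q (j + 1 + k + 1)).1 * (q (j + 1)).1) (fun s => by
        rw [mul_smul, hq, hq, hnx2, hnx2, ← hmul]
        have := ih k
        rw [show j + 1 + k = j + k + 1 by ring, (q j).2.1, this, hzero])
      rw [← mul_assoc] at h
      rw [show (p * (q (j + 1 + k + 1)).1) = (q (j + 1 + k + 1)).1 by rw [hq, hnx1]] at h
      exact h
  have hlt : ∀ i j, i < j → (q i).1 * (q j).1 = 0 := by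
    intro i j hij
    obtain ⟨k, rfl⟩ := Nat.exists_eq_add_of_lt hij
    rw [(q i).2.1]; exact horth i k
  let Lc : ℕ →o Ideal R := ⟨fun n => Ideal.span {x | ∃ i < n, x = (q i).1}, fun a b hab =>
    Ideal.span_mono (by rintro x ⟨i, hi, rfl⟩; exact ⟨i, by omega, rfl⟩)⟩
  obtain ⟨n, hn⟩ := monotone_stabilizes_iff_noetherian.2 (inferInstance : IsNoetherian R R) Lc
  have h1 : (q n).1 ∈ Lc n := by
    rw [hn (n + 1) (by omega)]
    exact Ideal.subset_span ⟨n, by omega, rfl⟩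
  have h2 : Lc n ≤ LinearMap.ker (LinearMap.toSpanSingleton R R (q n).1) := by
    refine Ideal.span_le.2 ?_
    rintro x ⟨i, hi, rfl⟩
    simpa using hlt i n hi
  have h3 := h2 h1
  simp only [LinearMap.mem_ker, LinearMap.toSpanSingleton_apply, smul_eq_mul] at h3
  rw [(q n).2.2.1] at h3
  exact (q n).2.2.2 h3

theorem sp_semisimple {A : Type*} [Ring A]
    (h : IsSemisimpleRing (RingCon.Quotient (⊥ : TwoSidedIdeal A).jacobson.ringCon)) :
    IsSemisimpleRing (A ⧸ Ring.jacobson A) := by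
  have hle : (⊥ : TwoSidedIdeal A).jacobson.ringCon ≤
      RingCon.ker (Ideal.Quotient.mk (Ring.jacobson A)) := by
    intro x y hxy
    rw [RingCon.ker_apply]
    rw [TwoSidedIdeal.rel_iff, ← TwoSidedIdeal.mem_asIdeal, TwoSidedIdeal.asIdeal_jacobson] at hxy
    rw [Ideal.Quotient.eq]
    simpa [Ideal.jacobson_bot] using hxy
  refine RingHom.isSemisimpleRing_of_surjective
    (RingCon.lift _ (Ideal.Quotient.mk (Ring.jacobson A)) hle) ?_
  intro x
  obtain ⟨a, rfl⟩ := Ideal.Quotient.mk_surjective x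
  exact ⟨(a : RingCon.Quotient _), rfl⟩

theorem sp_nil {A : Type*} [Ring A] {n : ℕ} (hn : ∀ f : Fin n → A,
    (∀ i, f i ∈ Ring.jacobson A) → (List.ofFn f).prod = 0) (x : A) (hx : x ∈ Ring.jacobson A) :
    x ^ n = 0 := by
  simpa using hn (fun _ => x) (fun _ => hx)

/-- the left socle, as the right annihilator of the radical -/
def spS (A : Type*) [Ring A] : Ideal A where
  carrier := {t | ∀ j ∈ Ring.jacobson A, j * t = 0}
  add_mem' := fun ha hb j hj => by rw [mul_add, ha j hj, hb j hj, add_zero]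
  zero_mem' := fun j _ => mul_zero j
  smul_mem' := fun c x hx j hj => by
    rw [smul_eq_mul, ← mul_assoc]; exact hx _ (Ideal.mul_mem_right c _ hj)

theorem sp_ess {A : Type*} [Ring A] {n : ℕ} (hn : ∀ f : Fin n → A,
    (∀ i, f i ∈ Ring.jacobson A) → (List.ofFn f).prod = 0) (x : A) (hx : x ≠ 0) :
    ∃ b, b * x ∈ spS A ∧ b * x ≠ 0 := by
  by_contra! hcon
  have h1 : ∀ b, b * x ≠ 0 → ∃ j ∈ Ring.jacobson A, j * (b * x) ≠ 0 := by
    intro b hb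
    by_contra! h
    exact hb (hcon b h)
  have h2 : ∀ k : ℕ, ∃ l : List A, l.length = k ∧ (∀ a ∈ l, a ∈ Ring.jacobson A) ∧
      l.prod * x ≠ 0 := by
    intro k
    induction k with
    | zero => exact ⟨[], rfl, by simp, by simpa using hx⟩
    | succ k ih =>
      obtain ⟨l, hl, hlJ, hl0⟩ := ih
      obtain ⟨j, hj, hj0⟩ := h1 _ hl0
      refine ⟨j :: l, by simp [hl], ?_, by simpa [mul_assoc] using hj0⟩
      intro a ha
      rcases List.mem_cons.1 ha with rfl | ha
      · exact hj
      · exact hlJ a ha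
  obtain ⟨l, rfl, hlJ, hl0⟩ := h2 n
  have := hn l.get (fun i => hlJ _ (List.get_mem l i))
  rw [List.ofFn_get] at this
  rw [this, zero_mul] at hl0
  exact hl0 rfl

theorem sp_ext {A : Type u} [Ring A] (hinj : Module.Injective A A) (x t : A)
    (h : ∀ a, a * x = 0 → a * t = 0) : ∃ b, x * b = t := by
  let fx : A →ₗ[A] A := LinearMap.toSpanSingleton A A x
  let ft : A →ₗ[A] A := LinearMap.toSpanSingleton A A t
  have hle : LinearMap.ker fx ≤ LinearMap.ker ft := by
    intro a ha
    simp only [fx, ft, LinearMap.mem_ker, LinearMap.toSpanSingleton_apply, smul_eq_mul] at ha ⊢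
    exact h a ha
  let i : (A ⧸ LinearMap.ker fx) →ₗ[A] A := (LinearMap.ker fx).liftQ fx le_rfl
  have hi : Function.Injective i := by
    rw [← LinearMap.ker_eq_bot]
    exact Submodule.ker_liftQ_eq_bot _ _ _ le_rfl
  obtain ⟨g, hg⟩ := hinj.out i hi ((LinearMap.ker fx).liftQ ft hle)
  have h1 := hg (Submodule.Quotient.mk 1)
  simp only [i, Submodule.liftQ_apply, fx, ft, LinearMap.toSpanSingleton_apply, one_smul] at h1
  refine ⟨g 1, ?_⟩
  rw [← smul_eq_mul, ← map_smul, smul_eq_mul, mul_one, h1]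

theorem sp_torsion (A : Type*) [Ring A] :
    Module.IsTorsionBySet A (spS A) (Ring.jacobson A : Set A) := by
  intro s j
  exact Subtype.ext (s.2 j.1 j.2)

theorem sp_SJ {A : Type u} [Ring A] (hss : IsSemisimpleRing (A ⧸ Ring.jacobson A)) {n : ℕ}
    (hn : ∀ f : Fin n → A, (∀ i, f i ∈ Ring.jacobson A) → (List.ofFn f).prod = 0)
    (hinj : Module.Injective A A) (a : A) (ha : a ∈ Ring.jacobson A) (s : A) (hs : s ∈ spS A) :
    s * a = 0 := by
  let _ := (sp_torsion A).module
  have hsem : IsSemisimpleModule A (spS A) :=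
    (sp_torsion A).isSemisimpleModule_iff.1 inferInstance
  let φ : spS A →ₗ[A] A := (LinearMap.toSpanSingleton A A a).comp (spS A).subtype
  have hφ : ∀ x, φ x = x.1 * a := fun x => rfl
  obtain ⟨K, hK⟩ := exists_isCompl (LinearMap.ker φ)
  have hinjK : Function.Injective (φ.comp K.subtype) := by
    rw [← LinearMap.ker_eq_bot, LinearMap.ker_eq_bot']
    intro k hk
    have : k.1 ∈ LinearMap.ker φ ⊓ K := ⟨hk, k.2⟩
    rw [hK.inf_eq_bot] at this
    exact Subtype.ext this
  obtain ⟨g, hg⟩ := hinj.out _ hinjK ((spS A).subtype.comp K.subtype)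
  have hK0 : K = ⊥ := by
    rw [eq_bot_iff]
    intro k hk
    have h1 : g (k.1 * a) = k.1 := hg ⟨k, hk⟩
    have h2 : k.1 * (1 - a * g 1) = 0 := by
      have : g (k.1 * a) = (k.1 * a) * g 1 := by
        rw [← smul_eq_mul (k.1 * a) (g 1), ← map_smul, smul_eq_mul, mul_one]
      rw [mul_sub, mul_one, ← mul_assoc, ← this, h1, sub_self]
    have hu : IsUnit (1 - a * g 1) :=
      IsNilpotent.isUnit_one_sub ⟨n, sp_nil hn _ (Ideal.mul_mem_right _ _ ha)⟩
    have h3 : k.1 = 0 := by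
      obtain ⟨v, hv⟩ := hu
      rw [← hv] at h2
      exact (Units.mul_left_eq_zero v).1 h2
    exact Subtype.ext h3
  have htop : LinearMap.ker φ = ⊤ := by
    have := hK.sup_eq_top
    rwa [hK0, sup_bot_eq] at this
  have : (⟨s, hs⟩ : spS A) ∈ LinearMap.ker φ := by rw [htop]; trivial
  exact this

theorem sp_rS {A : Type u} [Ring A] {n : ℕ}
    (hn : ∀ f : Fin n → A, (∀ i, f i ∈ Ring.jacobson A) → (List.ofFn f).prod = 0)
    (hinj : Module.Injective A A) (a : A) (ha : ∀ s ∈ spS A, s * a = 0) :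
    a ∈ Ring.jacobson A := by
  have hSr : ∀ s ∈ spS A, ∀ b, s * b ∈ spS A := fun s hs b j hj => by
    rw [← mul_assoc, hs j hj, zero_mul]
  -- elements `1 + y` with `S y = 0` are right invertible
  have key : ∀ y : A, (∀ s ∈ spS A, s * y = 0) → ∃ c, (1 + y) * c = 1 := by
    intro y hy
    apply sp_ext hinj
    intro d hd
    by_contra hd1
    rw [mul_one] at hd1
    obtain ⟨b, hb, hb0⟩ := sp_ess hn d hd1
    have h1 : b * d * (1 + y) = 0 := by rw [mul_assoc, hd, mul_zero]
    rw [mul_add, hy _ hb, add_zero, mul_one] at h1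
    exact hb0 h1
  rw [← Ideal.jacobson_bot, Ideal.mem_jacobson_iff]
  intro y
  have hya : ∀ s ∈ spS A, s * (y * a) = 0 := fun s hs => by
    rw [← mul_assoc]; exact ha _ (hSr s hs y)
  obtain ⟨c, hc⟩ := key (y * a) hya
  have hc1 : c = 1 + (-(y * a * c)) := by
    rw [add_mul, one_mul] at hc
    rw [← sub_eq_add_neg]; exact eq_sub_of_add_eq hc
  obtain ⟨d, hd⟩ := key (-(y * a * c)) (fun s hs => by
    rw [mul_neg, ← mul_assoc, hya s hs, zero_mul, neg_zero])
  rw [← hc1] at hd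
  have hd' : d = 1 + y * a := by
    calc d = ((1 + y * a) * c) * d := by rw [hc, one_mul]
      _ = 1 + y * a := by rw [mul_assoc, hd, mul_one]
  refine ⟨c, ?_⟩
  rw [hd'] at hd
  have : c * y * a + c - 1 = c * (1 + y * a) - 1 := by noncomm_ring
  rw [this, hd, sub_self]
  exact Submodule.zero_mem _

theorem sp_kasch {A : Type u} [Ring A] (hss : IsSemisimpleRing (A ⧸ Ring.jacobson A)) {n : ℕ}
    (hn : ∀ f : Fin n → A, (∀ i, f i ∈ Ring.jacobson A) → (List.ofFn f).prod = 0)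
    (hinj : Module.Injective A A) (a : A) (ha : ∀ s ∈ spS A, a * s = 0) :
    a ∈ Ring.jacobson A := by
  let _ := (sp_torsion A).module
  have hmk : ∀ (b : A) (s : spS A), (Ideal.Quotient.mk (Ring.jacobson A) b) • s = b • s :=
    fun b s => rfl
  have hSr : ∀ s ∈ spS A, ∀ b, s * b ∈ spS A := fun s hs b j hj => by
    rw [← mul_assoc, hs j hj, zero_mul]
  let out : A ⧸ Ring.jacobson A → A := fun r => Classical.choose (Ideal.Quotient.mk_surjective r)
  have hout : ∀ r, Ideal.Quotient.mk (Ring.jacobson A) (out r) = r := fun r =>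
    Classical.choose_spec (Ideal.Quotient.mk_surjective r)
  have hwd : ∀ b c, Ideal.Quotient.mk (Ring.jacobson A) b = Ideal.Quotient.mk _ c →
      ∀ s ∈ spS A, s * b = s * c := by
    intro b c hbc s hs
    have := sp_SJ hss hn hinj _ (Ideal.Quotient.eq.1 hbc) s hs
    rw [mul_sub] at this
    exact sub_eq_zero.1 this
  let m : A ⧸ Ring.jacobson A → (spS A →ₗ[A ⧸ Ring.jacobson A] spS A) := fun r =>
    { toFun := fun s => ⟨s.1 * out r, hSr _ s.2 _⟩
      map_add' := fun s t => Subtype.ext (add_mul _ _ _)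
      map_smul' := fun q s => by
        obtain ⟨b, rfl⟩ := Ideal.Quotient.mk_surjective q
        exact Subtype.ext (mul_assoc _ _ _) }
  have hm : ∀ r s, (m r s).1 = s.1 * out r := fun r s => rfl
  have hm' : ∀ b s, (m (Ideal.Quotient.mk _ b) s).1 = s.1 * b := fun b s =>
    hwd _ _ (hout _) _ s.2
  rw [← Ideal.Quotient.eq_zero_iff_mem]
  refine sp_faithful m ?_ ?_ ?_ ?_ _ ?_
  · intro b c s
    obtain ⟨b, rfl⟩ := Ideal.Quotient.mk_surjective b
    obtain ⟨c, rfl⟩ := Ideal.Quotient.mk_surjective c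
    apply Subtype.ext
    rw [← map_mul, hm', hm', hm', mul_assoc]
  · intro s
    apply Subtype.ext
    rw [← map_zero (Ideal.Quotient.mk (Ring.jacobson A)), hm', mul_zero]
    rfl
  · intro r hr
    obtain ⟨b, rfl⟩ := Ideal.Quotient.mk_surjective r
    rw [Ideal.Quotient.eq_zero_iff_mem]
    apply sp_rS hn hinj
    intro s hs
    have := congrArg Subtype.val (hr ⟨s, hs⟩)
    rwa [hm'] at this
  · intro f
    let f' : spS A →ₗ[A] A :=
      { toFun := fun s => (f s).1
        map_add' := fun s t => by rw [map_add]; rfl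
        map_smul' := fun b s => by rw [← hmk, map_smul]; rfl }
    obtain ⟨g, hg⟩ := hinj.out (spS A).subtype Subtype.val_injective f'
    refine ⟨Ideal.Quotient.mk _ (g 1), ?_⟩
    ext s
    rw [hm', ← smul_eq_mul, ← map_smul, smul_eq_mul, mul_one]
    exact (hg s).symm
  · intro s
    rw [hmk]
    exact Subtype.ext (ha _ s.2)

theorem sp_indec {A : Type u} [Ring A] (e f : A)
    (hind : IsIndecomposableModule A (Submodule.span A {e}))
    (hff : f * f = f) (hef : e * f = f) (hfe : f * e = f) (he : e * e = e) :
    f = 0 ∨ f = e := by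
  have hmem : ∀ x, x ∈ Submodule.span A {e} → x * e = x := by
    intro x hx
    obtain ⟨a, rfl⟩ := Submodule.mem_span_singleton.1 hx
    rw [smul_eq_mul, mul_assoc, he]
  have hz : ∀ g : A, g * e = g → ∀ h : (Submodule.span A {g}).comap
      (Submodule.span A {e}).subtype = ⊥, g = 0 := by
    intro g hg h
    have h1 : g ∈ Submodule.span A {e} := Submodule.mem_span_singleton.2 ⟨g, hg⟩
    have h2 : (⟨g, h1⟩ : Submodule.span A {e}) ∈ (Submodule.span A {g}).comap
      (Submodule.span A {e}).subtype := Submodule.mem_span_singleton_self g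
    rw [h] at h2
    exact congrArg Subtype.val ((Submodule.mem_bot A).1 h2)
  have hc : IsCompl ((Submodule.span A {f}).comap (Submodule.span A {e}).subtype)
      ((Submodule.span A {e - f}).comap (Submodule.span A {e}).subtype) := by
    constructor
    · rw [Submodule.disjoint_def]
      intro x hx hx'
      obtain ⟨a, ha⟩ := Submodule.mem_span_singleton.1 hx
      obtain ⟨b, hb⟩ := Submodule.mem_span_singleton.1 hx'
      simp only [Submodule.subtype_apply, smul_eq_mul] at ha hb
      apply Subtype.ext
      have h1 : x.1 * f = x.1 := by rw [← ha, mul_assoc, hff]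
      have h2 : x.1 * f = 0 := by rw [← hb, mul_assoc, sub_mul, hef, hff, sub_self, mul_zero]
      rw [← h1, h2]; rfl
    · rw [codisjoint_iff, eq_top_iff]
      intro x _
      have h1 : x.1 * f ∈ Submodule.span A {e} :=
        Submodule.mem_span_singleton.2 ⟨x.1 * f, by rw [smul_eq_mul, mul_assoc, hfe]⟩
      have h2 : x.1 * (e - f) ∈ Submodule.span A {e} :=
        Submodule.mem_span_singleton.2 ⟨x.1 * (e - f), by
          rw [smul_eq_mul, mul_assoc, sub_mul, hfe, he]⟩
      refine Submodule.mem_sup.2 ⟨⟨_, h1⟩, Submodule.mem_span_singleton.2 ⟨x.1, rfl⟩,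
        ⟨_, h2⟩, Submodule.mem_span_singleton.2 ⟨x.1, rfl⟩, ?_⟩
      apply Subtype.ext
      show x.1 * f + x.1 * (e - f) = x.1
      rw [← mul_add, add_sub_cancel, hmem _ x.2]
  rcases hind.2 _ _ hc with h | h
  · exact Or.inl (hz f hfe h)
  · right
    have := hz (e - f) (by rw [sub_mul, he, hfe]) h
    exact (sub_eq_zero.1 this).symm

theorem sp_bezout {A : Type*} [Ring A] (u : A) (n : ℕ) :
    ∃ a b : A, Commute u a ∧ Commute u b ∧ Commute a b ∧ u ^ n * a + (1 - u) ^ n * b = 1 := by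
  have h : IsCoprime (Polynomial.X : Polynomial ℤ) (1 - Polynomial.X) := ⟨1, 1, by ring⟩
  obtain ⟨a, b, hab⟩ := h.pow (m := n) (n := n)
  have hc : ∀ p q : Polynomial ℤ, Commute (Polynomial.aeval u p) (Polynomial.aeval u q) :=
    fun p q => by
      rw [Commute, SemiconjBy, ← map_mul, ← map_mul, mul_comm]
  refine ⟨Polynomial.aeval u a, Polynomial.aeval u b, ?_, ?_, hc _ _, ?_⟩
  · simpa using hc Polynomial.X a
  · simpa using hc Polynomial.X b
  · have := congrArg (Polynomial.aeval u) hab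
    rw [mul_comm a, mul_comm b] at this
    simpa using this

theorem sp_top {A : Type u} [Ring A] (hss : IsSemisimpleRing (A ⧸ Ring.jacobson A)) {n : ℕ}
    (hn0 : 0 < n)
    (hn : ∀ f : Fin n → A, (∀ i, f i ∈ Ring.jacobson A) → (List.ofFn f).prod = 0)
    (e : A) (he : e * e = e)
    (hind : IsIndecomposableModule A (Submodule.span A {e}))
    (c : A) (hce : c * e = c) (hc : c ∉ Ring.jacobson A) : ∃ b, b * c = e := by
  obtain ⟨y', hy⟩ := sp_regular (Ideal.Quotient.mk (Ring.jacobson A) c)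
  obtain ⟨y, rfl⟩ := Ideal.Quotient.mk_surjective y'
  rw [← map_mul, ← map_mul, Ideal.Quotient.eq] at hy
  obtain ⟨u, hu⟩ : ∃ u, u = e * y * c := ⟨_, rfl⟩
  have heu : e * u = u := by rw [hu, ← mul_assoc, ← mul_assoc, he]
  have hue : u * e = u := by rw [hu, mul_assoc, hce]
  have hcu : c * u = c * y * c := by rw [hu, ← mul_assoc, ← mul_assoc, hce]
  have huJ : u ∉ Ring.jacobson A := by
    intro h
    apply hc
    have h1 := Ideal.mul_mem_left _ c h
    rw [hcu] at h1
    have := Ideal.sub_mem _ h1 hy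
    simpa using this
  have huu : u * (1 - u) ∈ Ring.jacobson A := by
    have h1 : u * (1 - u) = -(e * y * (c * y * c - c)) := by
      have : u * u = e * y * (c * y * c) := by
        rw [← hcu]; nth_rw 1 [hu]; rw [mul_assoc]
      rw [mul_sub, this, mul_one, mul_sub, ← hu]; simp
    rw [h1]
    exact Submodule.neg_mem _ (Ideal.mul_mem_left _ _ hy)
  obtain ⟨a, b, hua, hub, hab, h1⟩ := sp_bezout u n
  have huc : Commute u (1 - u) := (Commute.one_right u).sub_right (Commute.refl u)
  have hnil : u ^ n * (1 - u) ^ n = 0 := by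
    rw [← huc.mul_pow]; exact sp_nil hn _ huu
  have hf : (u ^ n * a) * (u ^ n * a) = u ^ n * a := by
    have h2 : (u ^ n * a) * ((1 - u) ^ n * b) = 0 := by
      have hac : Commute a ((1 - u) ^ n) :=
        ((Commute.one_right a).sub_right hua.symm).pow_right n
      calc (u ^ n * a) * ((1 - u) ^ n * b) = u ^ n * (a * (1 - u) ^ n) * b := by
            simp only [mul_assoc]
        _ = (u ^ n * (1 - u) ^ n) * a * b := by rw [hac.eq]; simp only [mul_assoc]
        _ = 0 := by rw [hnil]; simp
    calc (u ^ n * a) * (u ^ n * a)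
        = (u ^ n * a) * (u ^ n * a + (1 - u) ^ n * b) := by rw [mul_add, h2, add_zero]
      _ = u ^ n * a := by rw [h1, mul_one]
  obtain ⟨k, rfl⟩ : ∃ k, n = k + 1 := ⟨n - 1, by omega⟩
  have hcomm : u ^ (k + 1) * a = a * u ^ (k + 1) := (hua.pow_left _).eq
  have hef : e * (u ^ (k + 1) * a) = u ^ (k + 1) * a := by
    rw [pow_succ', ← mul_assoc, ← mul_assoc, heu]
  have hfe : (u ^ (k + 1) * a) * e = u ^ (k + 1) * a := by
    rw [hcomm, pow_succ, mul_assoc, mul_assoc, hue]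
  rcases sp_indec e _ hind hf hef hfe he with h | h
  · exfalso
    apply huJ
    rw [h, zero_add] at h1
    have : u = u * (1 - u) * ((1 - u) ^ k * b) := by
      calc u = u * ((1 - u) ^ (k + 1) * b) := by rw [h1, mul_one]
        _ = _ := by rw [pow_succ']; simp only [mul_assoc]
    rw [this]
    exact Ideal.mul_mem_right _ _ huu
  · refine ⟨a * u ^ k * (e * y), ?_⟩
    calc a * u ^ k * (e * y) * c = a * (u ^ k * (e * y * c)) := by simp only [mul_assoc]
      _ = e := by rw [← hu, ← pow_succ, ← hcomm, h]

/-- For a left self-injective semiprimary ring `A` and an idempotent `e` such that the left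
`A`-module `Ae` is indecomposable, the right `A`-module `eA` has a simple socle, which is
moreover essential in `eA`. -/
theorem socle_eA_simple_essential_of_selfinjective_semiprimary
    (A : Type u) [Ring A] (hsp : IsSemiprimary A) (hinj : Module.Injective A A)
    (e : A) (he : IsIdempotentElem e)
    (hind : IsIndecomposableModule A (Submodule.span A {e})) :
    IsSimpleModule Aᵐᵒᵖ (socle Aᵐᵒᵖ (Submodule.span Aᵐᵒᵖ {e})) ∧
    IsEssentialSubmodule (socle Aᵐᵒᵖ (Submodule.span Aᵐᵒᵖ {e})) := by
  obtain ⟨hs, n, hn0, hn⟩ := hsp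
  have hss := sp_semisimple hs
  rw [Ideal.jacobson_bot] at hn
  have he' : e * e = e := he
  have he0 : e ≠ 0 := by
    rintro rfl
    obtain ⟨x, y, hxy⟩ := hind.1
    apply hxy
    have : ∀ x : Submodule.span A {(0 : A)}, x = 0 := fun x => by
      apply Subtype.ext
      obtain ⟨a, ha⟩ := Submodule.mem_span_singleton.1 x.2
      rw [← ha, smul_zero]; rfl
    rw [this x, this y]
  have heJ : e ∉ Ring.jacobson A := by
    intro h
    have := sp_nil hn e h
    rw [he.pow_eq (by omega)] at this
    exact he0 this
  obtain ⟨s, hsS, hs0⟩ : ∃ s ∈ spS A, e * s ≠ 0 := by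
    by_contra! h
    exact heJ (sp_kasch hss hn hinj e h)
  have hJt : ∀ j ∈ Ring.jacobson A, j * (e * s) = 0 := fun j hj => by
    rw [← mul_assoc]; exact hsS _ (Ideal.mul_mem_right _ _ hj)
  have key : ∀ x, e * x = x → x ≠ 0 → ∃ b, x * b = e * s := by
    intro x hex hx0
    apply sp_ext hinj
    intro a hax
    have h1 : a * e ∈ Ring.jacobson A := by
      by_contra h
      obtain ⟨b, hb⟩ := sp_top hss hn0 hn e he' hind (a * e) (by rw [mul_assoc, he']) h
      apply hx0
      rw [← hex, ← hb, mul_assoc, mul_assoc, hex, hax, mul_zero]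
    have := hJt _ h1
    rwa [mul_assoc, ← mul_assoc e, he'] at this
  have hmem : ∀ x, x ∈ Submodule.span Aᵐᵒᵖ {e} → e * x = x := by
    intro x hx
    obtain ⟨a, rfl⟩ := Submodule.mem_span_singleton.1 hx
    rw [MulOpposite.smul_eq_mul_unop, ← mul_assoc, he']
  have htm : e * s ∈ Submodule.span Aᵐᵒᵖ {e} :=
    Submodule.mem_span_singleton.2 ⟨MulOpposite.op s, rfl⟩
  let t : Submodule.span Aᵐᵒᵖ {e} := ⟨e * s, htm⟩
  let T : Submodule Aᵐᵒᵖ (Submodule.span Aᵐᵒᵖ {e}) := Submodule.span Aᵐᵒᵖ {t}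
  have hT0 : T ≠ ⊥ := by
    intro h
    have h1 : t ∈ T := Submodule.mem_span_singleton_self t
    rw [h] at h1
    exact hs0 (congrArg Subtype.val ((Submodule.mem_bot _).1 h1))
  have hT : ∀ P : Submodule Aᵐᵒᵖ (Submodule.span Aᵐᵒᵖ {e}), P ≠ ⊥ → T ≤ P := by
    intro P hP
    obtain ⟨x, hxP, hx0⟩ := P.ne_bot_iff.1 hP
    obtain ⟨b, hb⟩ := key x.1 (hmem _ x.2) (fun h => hx0 (Subtype.ext h))
    refine Submodule.span_le.2 ?_
    rw [Set.singleton_subset_iff]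
    have : t = MulOpposite.op b • x := Subtype.ext hb.symm
    rw [this]
    exact P.smul_mem _ hxP
  have hatom : IsAtom T := ⟨hT0, fun P hP => by
    by_contra h
    exact absurd (hT P h) (not_le_of_gt hP)⟩
  have hsoc : socle Aᵐᵒᵖ (Submodule.span Aᵐᵒᵖ {e}) = T := by
    apply le_antisymm
    · refine sSup_le ?_
      intro N hN
      have hN' : IsAtom N := isSimpleModule_iff_isAtom.1 hN
      rcases hN'.le_iff.1 (hT N hN'.1) with h | h
      · exact absurd h hT0
      · exact h.ge
    · exact le_sSup (isSimpleModule_iff_isAtom.2 hatom)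
  rw [hsoc]
  refine ⟨isSimpleModule_iff_isAtom.2 hatom, fun P hP => ?_⟩
  by_contra h
  exact hT0 (by rw [← inf_eq_left.2 (hT P h), hP])
end

section
/- Let A be a left self-injective semiprimary ring. Then the right socle of A coincides with the left socle Σ of A, it is finitely generated as a right A-module, and its length as a left A-module equals its length as a right A-module. -/
universe u

open Cardinal

/-- The length of a module, defined as the Krull dimension of its lattice of submodules. -/
noncomputable def moduleLength (R M : Type*) [Ring R] [AddCommGroup M] [Module R M] :
    WithBot ℕ∞ :=
  Order.krullDim (Submodule R M)


namespace SocleProof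

structure Core (A : Type u) [Ring A] (J : Ideal A) : Prop where
  two : ∀ j ∈ J, ∀ a : A, j * a ∈ J
  ss : IsSemisimpleModule A (A ⧸ J)
  unit : ∀ j ∈ J, IsUnit (1 - j)
  mem : ∀ b : A, (∀ c, IsUnit (1 + c * b)) → b ∈ J
  nil : ∃ n : ℕ, ∀ l : List A, l.length = n → (∀ j ∈ l, j ∈ J) → l.prod = 0

lemma core_of (A : Type u) [Ring A] (h : IsSemiprimary A) :
    Core A (Ideal.jacobson (⊥ : Ideal A)) := by
  obtain ⟨h1, n, hn, h2⟩ := h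
  refine ⟨fun j hj a => Ideal.mul_mem_right a _ hj, ?_, ?_, ?_, n, ?_⟩
  · set K := (⊥ : TwoSidedIdeal A).jacobson with hK
    let π : A →+* K.ringCon.Quotient := K.ringCon.mk'
    have hπ : Function.Surjective π := K.ringCon.mk'_surjective
    have hker : ∀ x, π x = 0 ↔ x ∈ Ideal.jacobson (⊥ : Ideal A) := by
      intro x
      have e1 : π x = 0 ↔ x ∈ K := by
        rw [TwoSidedIdeal.mem_iff, ← RingCon.eq]
        rfl
      rw [e1, ← TwoSidedIdeal.mem_asIdeal, hK, TwoSidedIdeal.asIdeal_jacobson]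
      simp
    have : RingHomSurjective π := ⟨hπ⟩
    let f : (A ⧸ Ideal.jacobson (⊥ : Ideal A)) →ₛₗ[π] K.ringCon.Quotient :=
      Submodule.liftQ _ (⟨⟨π, map_add π⟩, fun a b => map_mul π a b⟩ : A →ₛₗ[π] K.ringCon.Quotient)
        (fun x hx => (hker x).2 hx)
    refine (LinearMap.isSemisimpleModule_iff_of_bijective f ⟨?_, ?_⟩).2 h1
    · rw [injective_iff_map_eq_zero]
      intro a
      induction a using Submodule.Quotient.induction_on with
      | H x =>
        intro hx
        exact (Submodule.Quotient.mk_eq_zero _).2 ((hker x).1 hx)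
    · intro y
      obtain ⟨x, rfl⟩ := hπ y
      exact ⟨Submodule.Quotient.mk x, rfl⟩
  · have key : ∀ j ∈ Ideal.jacobson (⊥ : Ideal A), ∃ z, z * (1 - j) = 1 := by
      intro j hj
      obtain ⟨z, hz⟩ := Ideal.mem_jacobson_iff.1 hj (-1)
      refine ⟨z, ?_⟩
      rw [Ideal.mem_bot] at hz
      have : z * (1 - j) - 1 = z * -1 * j + z - 1 := by noncomm_ring
      rw [← sub_eq_zero, this, hz]
    intro j hj
    obtain ⟨z, hz⟩ := key j hj
    obtain ⟨w, hw⟩ := key (-(z * j)) (neg_mem (Ideal.mul_mem_left _ _ hj))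
    have hz' : 1 - -(z * j) = z := by
      have : z - z * j = 1 := by rw [← hz]; noncomm_ring
      rw [← this]; noncomm_ring
    rw [hz'] at hw
    have : w = 1 - j := left_inv_eq_right_inv hw hz
    rw [this] at hw
    exact ⟨⟨1 - j, z, hw, hz⟩, rfl⟩
  · intro b hb
    rw [Ideal.mem_jacobson_iff]
    intro y
    obtain ⟨z, hz⟩ := (hb y).exists_left_inv
    refine ⟨z, ?_⟩
    rw [Ideal.mem_bot, sub_eq_zero, ← hz]
    noncomm_ring
  · intro l hl hJ
    subst hl
    have := h2 l.get (fun i => hJ _ (List.get_mem l i))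
    rwa [List.ofFn_get] at this

def Inj (A : Type u) [Ring A] : Prop :=
  ∀ (N : Ideal A) (f : N →ₗ[A] A), ∃ b : A, ∀ x (h : x ∈ N), f ⟨x, h⟩ = x * b

lemma inj_of (A : Type u) [Ring A] (h : Module.Injective A A) : Inj A := by
  intro N f
  obtain ⟨g, hg⟩ := Module.Baer.of_injective h N f
  refine ⟨g 1, fun x hx => ?_⟩
  rw [← hg x hx, ← smul_eq_mul, ← map_smul, smul_eq_mul, mul_one]

section ann
variable {A : Type u} [Ring A]

def lann (X : Set A) : Ideal A where
  carrier := {c | ∀ x ∈ X, c * x = 0}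
  add_mem' := fun ha hb x hx => by rw [add_mul, ha x hx, hb x hx, add_zero]
  zero_mem' := fun x _ => zero_mul x
  smul_mem' := fun c a ha x hx => by rw [smul_eq_mul, mul_assoc, ha x hx, mul_zero]

def rann (X : Set A) : Submodule Aᵐᵒᵖ A where
  carrier := {x | ∀ c ∈ X, c * x = 0}
  add_mem' := fun ha hb x hx => by rw [mul_add, ha x hx, hb x hx, add_zero]
  zero_mem' := fun x _ => mul_zero x
  smul_mem' := fun c a ha x hx => by
    rw [← MulOpposite.op_unop c, op_smul_eq_mul, ← mul_assoc, ha x hx, zero_mul]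

/-- the left socle as annihilator of `J` -/
def S (J : Ideal A) (hJ : ∀ j ∈ J, ∀ a : A, j * a ∈ J) : Ideal A where
  carrier := {x | ∀ j ∈ J, j * x = 0}
  add_mem' := fun ha hb x hx => by rw [mul_add, ha x hx, hb x hx, add_zero]
  zero_mem' := fun x _ => mul_zero x
  smul_mem' := fun c a ha x hx => by
    rw [smul_eq_mul, ← mul_assoc]; exact ha _ (hJ x hx c)

lemma inj2 (hi : Inj A) (x y : A) (h : ∀ c, c * x = 0 → c * y = 0) : ∃ b, y = x * b := by
  let g : A →ₗ[A] A := LinearMap.toSpanSingleton A A x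
  let k : A →ₗ[A] A := LinearMap.toSpanSingleton A A y
  have hk : LinearMap.ker g ≤ LinearMap.ker k := fun c hc => h c hc
  let f : LinearMap.range g →ₗ[A] A :=
    (LinearMap.ker g).liftQ k hk ∘ₗ g.quotKerEquivRange.symm.toLinearMap
  obtain ⟨b, hb⟩ := hi (LinearMap.range g) f
  refine ⟨b, ?_⟩
  have hx : x ∈ LinearMap.range g := ⟨1, by simp [g]⟩
  rw [← hb x hx]
  have : (⟨x, hx⟩ : LinearMap.range g) = g.quotKerEquivRange (Submodule.Quotient.mk 1) := by
    apply Subtype.ext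
    simp [LinearMap.quotKerEquivRange_apply_mk, g]
  rw [this]
  simp [f, k]

lemma right_inv_of_inj (hi : Inj A) (u : A) (h : ∀ x, x * u = 0 → x = 0) : ∃ d, u * d = 1 := by
  obtain ⟨b, hb⟩ := inj2 hi u 1 (fun c hc => by rw [h c hc, zero_mul])
  exact ⟨b, hb.symm⟩

lemma rann_inf (hinj : Module.Injective A A) (L₁ L₂ : Ideal A) (x : A)
    (hx : x ∈ rann (A := A) ((L₁ ⊓ L₂ : Ideal A) : Set A)) :
    x ∈ rann (A := A) L₁ ⊔ rann (A := A) L₂ := by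
  let f : (A ⧸ (L₁ ⊓ L₂)) →ₗ[A] (A ⧸ L₁) × (A ⧸ L₂) :=
    Submodule.liftQ _ (L₁.mkQ.prod L₂.mkQ) (by simp [LinearMap.ker_prod])
  let g : (A ⧸ (L₁ ⊓ L₂)) →ₗ[A] A :=
    Submodule.liftQ _ (LinearMap.toSpanSingleton A A x) (fun c hc => hx c hc)
  have hf : Function.Injective f := by
    rw [← LinearMap.ker_eq_bot]
    exact Submodule.ker_liftQ_eq_bot _ _ _ (by simp [LinearMap.ker_prod])
  obtain ⟨h, hh⟩ := hinj.out f hf g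
  have h1 := hh (Submodule.Quotient.mk 1)
  have e1 : f (Submodule.Quotient.mk 1) = (Submodule.Quotient.mk 1, Submodule.Quotient.mk 1) := rfl
  have e2 : g (Submodule.Quotient.mk 1) = x := by
    change (1 : A) • x = x
    simp
  rw [e1, e2] at h1
  rw [Submodule.mem_sup]
  refine ⟨h (Submodule.Quotient.mk 1, 0), ?_, h (0, Submodule.Quotient.mk 1), ?_, ?_⟩
  · intro c hc
    rw [← smul_eq_mul, ← map_smul, Prod.smul_mk, smul_zero, ← Submodule.Quotient.mk_smul,
      smul_eq_mul, mul_one, (Submodule.Quotient.mk_eq_zero _).2 hc]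
    exact map_zero h
  · intro c hc
    rw [← smul_eq_mul, ← map_smul, Prod.smul_mk, smul_zero, ← Submodule.Quotient.mk_smul,
      smul_eq_mul, mul_one, (Submodule.Quotient.mk_eq_zero _).2 hc]
    exact map_zero h
  · rw [← map_add, Prod.mk_add_mk, add_zero, zero_add, h1]

lemma rann_lann_fg (hinj : Module.Injective A A) (I : Submodule Aᵐᵒᵖ A) (hI : I.FG) :
    rann (A := A) (lann (A := A) I) ≤ I := by
  refine Submodule.fg_induction (R := Aᵐᵒᵖ) (M := A)
    (motive := fun I _ => rann (A := A) (lann (A := A) I) ≤ I) ?_ ?_ I hI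
  · intro x y hy
    obtain ⟨b, hb⟩ := inj2 (inj_of A hinj) x y (fun c hc => hy c (by
      intro z hz
      obtain ⟨a, rfl⟩ := Submodule.mem_span_singleton.1 hz
      rw [← MulOpposite.op_unop a, op_smul_eq_mul, ← mul_assoc, hc, zero_mul]))
    rw [hb, ← op_smul_eq_mul]
    exact Submodule.smul_mem _ _ (Submodule.mem_span_singleton_self x)
  · intro I₁ I₂ _ _ h1 h2 x hx
    refine sup_le_sup h1 h2 (rann_inf hinj _ _ x ?_)
    intro c hc
    refine hx c ?_
    intro z hz
    obtain ⟨y, hy, w, hw, rfl⟩ := Submodule.mem_sup.1 hz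
    rw [mul_add, hc.1 y hy, hc.2 w hw, add_zero]

end ann

section simple
variable {R M : Type*} [Ring R] [AddCommGroup M] [Module R M]

lemma simple_span (x : M) (hx : x ≠ 0) (h : ∀ c : R, c • x ≠ 0 → ∃ d : R, d • c • x = x) :
    IsSimpleModule R (Submodule.span R {x}) := by
  rw [isSimpleModule_iff_isAtom]
  refine ⟨by simpa using hx, fun N hN => ?_⟩
  by_contra hne
  obtain ⟨y, hy, hy0⟩ := (Submodule.ne_bot_iff _).1 hne
  obtain ⟨c, rfl⟩ := Submodule.mem_span_singleton.1 (hN.le hy)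
  obtain ⟨d, hd⟩ := h c hy0
  refine not_le_of_gt hN ?_
  rw [Submodule.span_singleton_le_iff_mem, ← hd]
  exact N.smul_mem _ hy

lemma simple_prop (N : Submodule R M) [IsSimpleModule R N] (x y : M) (hx : x ∈ N) (hy : y ∈ N)
    (hx0 : x ≠ 0) : ∃ d : R, d • x = y := by
  have := IsSimpleModule.toSpanSingleton_surjective R (M := N) (m := ⟨x, hx⟩)
    (by simpa [Subtype.ext_iff] using hx0) ⟨y, hy⟩
  obtain ⟨d, hd⟩ := this
  exact ⟨d, congrArg Subtype.val hd⟩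

lemma mem_socle_of (x : M) (h : ∀ c : R, c • x ≠ 0 → ∃ d : R, d • c • x = x) :
    x ∈ socle R M := by
  by_cases hx : x = 0
  · rw [hx]; exact zero_mem _
  · exact (le_sSup (simple_span x hx h) : Submodule.span R {x} ≤ socle R M)
      (Submodule.mem_span_singleton_self x)

end simple

section core
variable {A : Type u} [Ring A] {J : Ideal A}

lemma exists_e (hc : Core A J) (L : Ideal A) (hL : J ≤ L) :
    ∃ e ∈ L, ∀ a ∈ L, a - a * e ∈ J := by
  have := hc.ss
  obtain ⟨K, hK⟩ := exists_isCompl (Submodule.map J.mkQ L)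
  have h1 : J.mkQ 1 ∈ Submodule.map J.mkQ L ⊔ K := by rw [hK.sup_eq_top]; trivial
  obtain ⟨y, hy, z, hz, hyz⟩ := Submodule.mem_sup.1 h1
  obtain ⟨e, he, rfl⟩ := hy
  refine ⟨e, he, fun a ha => ?_⟩
  have h2 : J.mkQ (a - a * e) = a • z := by
    have : z = J.mkQ 1 - J.mkQ e := by rw [← hyz]; abel
    rw [this, smul_sub, ← map_smul, ← map_smul, ← map_sub, smul_eq_mul, smul_eq_mul, mul_one]
  have h3 : J.mkQ (a - a * e) ∈ Submodule.map J.mkQ L :=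
    Submodule.mem_map_of_mem (L.sub_mem ha (L.mul_mem_left a he))
  have h4 : J.mkQ (a - a * e) ∈ K := by rw [h2]; exact K.smul_mem _ hz
  have h5 : J.mkQ (a - a * e) ∈ Submodule.map J.mkQ L ⊓ K := ⟨h3, h4⟩
  rw [hK.inf_eq_bot, Submodule.mem_bot] at h5
  exact (Submodule.Quotient.mk_eq_zero _).1 h5

lemma S_ss (hc : Core A J) : IsSemisimpleModule A (S J hc.two) := by
  have h : S J hc.two = ⨆ x ∈ (S J hc.two : Set A), Submodule.span A {x} := by
    apply le_antisymm
    · intro x hx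
      exact (le_iSup₂_of_le (f := fun x (_ : x ∈ (S J hc.two : Set A)) => Submodule.span A {x})
        x hx le_rfl) (Submodule.mem_span_singleton_self x)
    · refine iSup₂_le fun x hx => ?_
      rw [Submodule.span_singleton_le_iff_mem]; exact hx
  rw [h]
  apply isSemisimpleModule_biSup_of_isSemisimpleModule_submodule
  intro x hx
  have := hc.ss
  have hk : J ≤ LinearMap.ker (LinearMap.toSpanSingleton A A x) := fun c hc => hx c hc
  let g : (A ⧸ J) →ₗ[A] A := Submodule.liftQ _ (LinearMap.toSpanSingleton A A x) hk
  have hr : LinearMap.range g = Submodule.span A {x} := by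
    exact (Submodule.range_liftQ J _ _).trans (LinearMap.range_toSpanSingleton x)
  rw [← hr]
  exact IsSemisimpleModule.range g

lemma simple_le_S (hc : Core A J) (T : Ideal A) (hT : IsSimpleModule A T) :
    T ≤ S J hc.two := by
  intro x hx j hj
  by_contra hne
  obtain ⟨d, hd⟩ := simple_prop T (j * x) x (T.mul_mem_left j hx) hx hne
  have h1 : (1 - d * j) * x = 0 := by
    rw [sub_mul, one_mul, mul_assoc, ← smul_eq_mul d, hd, sub_self]
  have h2 := (hc.unit _ (J.mul_mem_left d hj)).mul_right_eq_zero.1 h1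
  exact hne (by rw [h2, mul_zero])

lemma S_eq (hc : Core A J) : S J hc.two = socle A A := by
  apply le_antisymm
  · have := S_ss hc
    have h := IsSemisimpleModule.sSup_simples_eq_top A (S J hc.two)
    have h2 : (⊤ : Submodule A (S J hc.two)) ≤ (socle A A).comap (S J hc.two).subtype := by
      rw [← h]
      refine sSup_le fun T hT => ?_
      have : IsSimpleModule A T := hT
      rw [← Submodule.map_le_iff_le_comap]
      refine le_sSup ?_
      exact IsSimpleModule.congr (T.equivMapOfInjective _ (Submodule.injective_subtype _)).symm
    intro x hx
    exact h2 (x := ⟨x, hx⟩) trivial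
  · exact sSup_le fun T hT => simple_le_S hc T hT

lemma simple_flip (hi : Inj A) (x : A) (h : ∀ c : A, c * x ≠ 0 → ∃ d : A, d * (c * x) = x)
    (a : A) (ha : x * a ≠ 0) : ∃ b, x * a * b = x := by
  obtain ⟨b, hb⟩ := inj2 hi (x * a) x (by
    intro c hca
    by_contra hcx
    obtain ⟨d, hd⟩ := h c hcx
    refine ha ?_
    rw [← hd, mul_assoc, mul_assoc, hca, mul_zero])
  exact ⟨b, hb.symm⟩

lemma S_J (hc : Core A J) (hi : Inj A) : ∀ x ∈ S J hc.two, ∀ j ∈ J, x * j = 0 := by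
  intro x hx j hj
  suffices h : S J hc.two ≤ lann {j} from h hx j rfl
  rw [S_eq hc]
  refine sSup_le fun T hT x hx j' hj' => ?_
  have : IsSimpleModule A T := hT
  rw [Set.mem_singleton_iff] at hj'
  subst hj'
  by_contra hne
  obtain ⟨b, hb⟩ := simple_flip hi x
    (fun c hcx => simple_prop T _ _ (T.mul_mem_left c hx) hx hcx) j' hne
  have h1 : x * (1 - j' * b) = 0 := by rw [mul_sub, mul_one, ← mul_assoc, hb, sub_self]
  have h2 := (hc.unit _ (hc.two _ hj b)).mul_left_eq_zero.1 h1
  exact hne (by rw [h2, zero_mul])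

lemma S_right (hc : Core A J) (x : A) (hx : x ∈ S J hc.two) (a : A) : x * a ∈ S J hc.two := by
  intro j hj
  rw [← mul_assoc, hx j hj, zero_mul]

lemma ess (hc : Core A J) (x : A) (hx : x ≠ 0) : ∃ c, c * x ≠ 0 ∧ c * x ∈ S J hc.two := by
  obtain ⟨n, hn⟩ := hc.nil
  have : ∀ n : ℕ, ∀ x : A, x ≠ 0 →
      (∀ l : List A, l.length = n → (∀ j ∈ l, j ∈ J) → l.prod * x = 0) →
      ∃ c, c * x ≠ 0 ∧ c * x ∈ S J hc.two := by
    intro n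
    induction n with
    | zero =>
      intro x hx h
      exact absurd (by simpa using h [] rfl (by simp)) hx
    | succ n ih =>
      intro x hx h
      by_cases hS : x ∈ S J hc.two
      · exact ⟨1, by simpa using hx, by simpa using hS⟩
      · have : ∃ j ∈ J, j * x ≠ 0 := by
          by_contra hcon
          push Not at hcon
          exact hS hcon
        obtain ⟨j, hj, hjx⟩ := this
        obtain ⟨c, h1, h2⟩ := ih (j * x) hjx (by
          intro l hl hlJ
          have := h (l ++ [j]) (by simp [hl]) (by
            intro i hi
            rcases List.mem_append.1 hi with hi | hi
            · exact hlJ i hi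
            · rw [List.mem_singleton.1 hi]; exact hj)
          rwa [List.prod_append, List.prod_singleton, mul_assoc] at this)
        exact ⟨c * j, by rwa [mul_assoc], by rwa [mul_assoc]⟩
  exact this n x hx (fun l hl hlJ => by rw [hn l hl hlJ, zero_mul])

lemma mem_J_of (hc : Core A J) (hi : Inj A) (b : A) (hb : ∀ s ∈ S J hc.two, s * b = 0) :
    b ∈ J := by
  have key : ∀ k, (∀ s ∈ S J hc.two, s * k = 0) → ∃ d, (1 + k) * d = 1 := by
    intro k hk
    refine right_inv_of_inj hi _ fun x hx => ?_
    by_contra hne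
    obtain ⟨c, h1, h2⟩ := ess hc x hne
    refine h1 ?_
    have h3 := hk _ h2
    calc c * x = c * (x * (1 + k)) - c * x * k := by noncomm_ring
      _ = 0 := by rw [hx, h3, mul_zero, sub_zero]
  refine hc.mem b fun c => ?_
  have hcb : ∀ s ∈ S J hc.two, s * (c * b) = 0 := fun s hs => by
    rw [← mul_assoc]; exact hb _ (S_right hc s hs c)
  obtain ⟨d, hd⟩ := key (c * b) hcb
  have hd2 : d = 1 + -(c * b * d) := by
    rw [← hd]; noncomm_ring
  obtain ⟨w, hw⟩ := key (-(c * b * d)) (fun s hs => by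
    rw [mul_neg, ← mul_assoc, hcb s hs, zero_mul, neg_zero])
  rw [← hd2] at hw
  have : 1 + c * b = w := left_inv_eq_right_inv hd hw
  rw [← this] at hw
  exact ⟨⟨1 + c * b, d, hd, hw⟩, rfl⟩

/-- `{b | S b ⊆ N}` -/
def Phi (hc : Core A J) (N : Ideal A) : Ideal A where
  carrier := {b | ∀ s ∈ S J hc.two, s * b ∈ N}
  add_mem' := fun ha hb s hs => by rw [mul_add]; exact N.add_mem (ha s hs) (hb s hs)
  zero_mem' := fun s _ => by rw [mul_zero]; exact N.zero_mem
  smul_mem' := fun c a ha s hs => by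
    rw [smul_eq_mul, ← mul_assoc]; exact ha _ (S_right hc s hs c)

/-- `{b | b S ⊆ N}` -/
def Rho (hc : Core A J) (N : Ideal A) : Ideal A where
  carrier := {b | ∀ s ∈ S J hc.two, b * s ∈ N}
  add_mem' := fun ha hb s hs => by rw [add_mul]; exact N.add_mem (ha s hs) (hb s hs)
  zero_mem' := fun s _ => by rw [zero_mul]; exact N.zero_mem
  smul_mem' := fun c a ha s hs => by
    rw [smul_eq_mul, mul_assoc]; exact N.mul_mem_left c (ha s hs)

lemma Phi_mul (hc : Core A J) (hi : Inj A) (L : Ideal A) (hL : J ≤ L) :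
    Phi hc (S J hc.two * L) = L := by
  apply le_antisymm
  · intro b hb
    obtain ⟨e, he, h⟩ := exists_e hc L hL
    have h1 : S J hc.two * L ≤ lann {1 - e} := by
      rw [Ideal.mul_le]
      intro s hs a ha x hx
      rw [Set.mem_singleton_iff.1 hx, mul_assoc, mul_sub, mul_one]
      exact S_J hc hi s hs _ (h a ha)
    have h2 : b * (1 - e) ∈ J := mem_J_of hc hi _ fun s hs => by
      rw [← mul_assoc]; exact h1 (hb s hs) _ rfl
    have : b = b * (1 - e) + b * e := by noncomm_ring
    rw [this]
    exact L.add_mem (hL h2) (L.mul_mem_left b he)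
  · intro b hb s hs
    exact Ideal.mul_mem_mul hs hb

lemma exists_proj (hc : Core A J) (hi : Inj A) (N : Ideal A) (hN : N ≤ S J hc.two) :
    ∃ b, (∀ s ∈ S J hc.two, s * b ∈ N) ∧ ∀ x ∈ N, x * b = x := by
  have := S_ss hc
  obtain ⟨K, hK⟩ := exists_isCompl (Submodule.comap (Submodule.subtype (S J hc.two)) N)
  let p := Submodule.projection _ _ hK
  obtain ⟨b, hb⟩ := hi (S J hc.two) ((S J hc.two).subtype ∘ₗ p)
  refine ⟨b, fun s hs => ?_, fun x hx => ?_⟩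
  · rw [← hb s hs]
    exact Submodule.projection_apply_mem hK ⟨s, hs⟩
  · rw [← hb x (hN hx)]
    have : p ⟨x, hN hx⟩ = ⟨x, hN hx⟩ := Submodule.projection_apply_left hK ⟨⟨x, hN hx⟩, hx⟩
    simp [this]

lemma separation (hc : Core A J) (hi : Inj A) (N : Ideal A) (hN : N ≤ S J hc.two)
    (hr : ∀ x ∈ N, ∀ a, x * a ∈ N) :
    ∃ q, (∀ x ∈ N, q * x = x) ∧ ∀ s ∈ S J hc.two, q * s ∈ N := by
  obtain ⟨b, hb1, hb2⟩ := exists_proj hc hi N hN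
  let N' : Ideal A := S J hc.two ⊓ lann {b}
  have htop : lann (A := A) N ⊔ lann (A := A) N' = ⊤ := by
    by_contra hne
    obtain ⟨M, hM, hle⟩ := Ideal.exists_le_maximal _ hne
    have hJN : J ≤ lann (A := A) N := fun j hj x hx => hN hx j hj
    have hJM : J ≤ M := hJN.trans (le_sup_left.trans hle)
    obtain ⟨e, he, h⟩ := exists_e hc M hJM
    have h1 : 1 - e ∉ M := fun h1 => hM.ne_top ((Ideal.eq_top_iff_one M).2 (by
      simpa using M.add_mem h1 he))
    have hx : ∃ x ∈ N, (1 - e) * x ≠ 0 := by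
      by_contra hcon
      push Not at hcon
      exact h1 (hle (le_sup_left (a := lann (A := A) N) hcon))
    have hx' : ∃ x ∈ N', (1 - e) * x ≠ 0 := by
      by_contra hcon
      push Not at hcon
      exact h1 (hle (le_sup_right (b := lann (A := A) N') hcon))
    obtain ⟨x, hx, hx0⟩ := hx
    obtain ⟨y, hy, hy0⟩ := hx'
    have hk : ∀ z ∈ S J hc.two, M ≤ lann {(1 - e) * z} := by
      intro z hz m hm w hw
      rw [Set.mem_singleton_iff.1 hw, ← mul_assoc, mul_sub, mul_one]
      exact hz _ (h m hm)
    have hMx : M = lann {(1 - e) * x} := hM.eq_of_le (by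
      rw [Ne, Ideal.eq_top_iff_one]
      intro h1
      exact hx0 (by simpa using h1 _ rfl)) (hk x (hN hx))
    obtain ⟨a, ha⟩ := inj2 hi ((1 - e) * x) ((1 - e) * y) (by
      intro c hcx
      have : c ∈ M := by
        rw [hMx]; intro w hw; rw [Set.mem_singleton_iff.1 hw]; exact hcx
      exact hk y hy.1 this _ rfl)
    have m1 : (1 - e) * y ∈ N := by rw [ha]; exact hr _ (N.mul_mem_left _ hx) _
    have m2 : (1 - e) * y ∈ N' := N'.mul_mem_left _ hy
    refine hy0 ?_
    rw [← hb2 _ m1]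
    exact m2.2 b rfl
  have h1 : (1 : A) ∈ lann (A := A) N ⊔ lann (A := A) N' := by rw [htop]; trivial
  obtain ⟨p, hp, q, hq, hpq⟩ := Submodule.mem_sup.1 h1
  have hqN : ∀ x ∈ N, q * x = x := fun x hx => by
    have := congrArg (· * x) hpq
    simpa [add_mul, hp x hx] using this
  refine ⟨q, hqN, fun s hs => ?_⟩
  have hs' : s - s * b ∈ N' := by
    refine ⟨(S J hc.two).sub_mem hs (hN (hb1 s hs)), fun w hw => ?_⟩
    rw [Set.mem_singleton_iff.1 hw, sub_mul, hb2 _ (hb1 s hs), sub_self]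
  have h2 := hq _ hs'
  rw [mul_sub, sub_eq_zero] at h2
  rw [h2]
  exact N.mul_mem_left _ (hb1 s hs)

lemma lann_S (hc : Core A J) (hi : Inj A) (c : A) (h : ∀ s ∈ S J hc.two, c * s = 0) : c ∈ J := by
  let Ψ : Ideal A → Ideal A := fun I => Rho hc (S J hc.two * I)
  let P : Ideal A → Prop := fun I => J ≤ I ∧ ∀ x ∈ I, ∀ a, x * a ∈ I
  have hJS : ∀ N, J ≤ Rho hc N := fun N j hj s hs => by
    rw [hs j hj]; exact N.zero_mem
  have hP : ∀ I, P (Ψ I) := by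
    intro I
    refine ⟨hJS _, fun x hx a s hs => ?_⟩
    rw [mul_assoc]
    exact hx _ ((S J hc.two).mul_mem_left a hs)
  have hmono : Monotone Ψ := fun I I' hII b hb s hs => Ideal.mul_mono_right hII (hb s hs)
  have hle : ∀ I I', P I → P I' → Ψ I ≤ Ψ I' → I ≤ I' := by
    intro I I' hI hI' hle
    have hsub : S J hc.two * I ≤ S J hc.two := Ideal.mul_le.2 fun s hs a _ => S_right hc s hs a
    have hst : ∀ x ∈ S J hc.two * I, ∀ a, x * a ∈ S J hc.two * I := by
      have : I.IsTwoSided := ⟨fun {a} b ha => hI.2 a ha b⟩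
      intro x hx a
      exact Ideal.mul_mem_right a _ hx
    obtain ⟨q, hq1, hq2⟩ := separation hc hi _ hsub hst
    have h1 : S J hc.two * I ≤ S J hc.two * I' := by
      intro x hx
      rw [← hq1 x hx]
      exact (hle : Ψ I ≤ Ψ I') hq2 x (hsub hx)
    rw [← Phi_mul hc hi I hI.1, ← Phi_mul hc hi I' hI'.1]
    exact fun b hb s hs => h1 (hb s hs)
  have hPJ : P J := ⟨le_rfl, hc.two⟩
  have hPn : ∀ n, P (Ψ^[n] J) := by
    intro n
    cases n with
    | zero => exact hPJ
    | succ n => rw [Function.iterate_succ_apply']; exact hP _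
  have hmon : Monotone fun n => Ψ^[n] J :=
    hmono.monotone_iterate_of_le_map (hJS _)
  have := hc.ss
  let f : ℕ →o Submodule A (A ⧸ J) :=
    ⟨fun n => Submodule.map J.mkQ (Ψ^[n] J), fun a b hab => Submodule.map_mono (hmon hab)⟩
  obtain ⟨n, hn⟩ := monotone_stabilizes_iff_noetherian.2
    (inferInstance : IsNoetherian A (A ⧸ J)) f
  have hn1 : Ψ^[n+1] J ≤ Ψ^[n] J := by
    have h1 : Submodule.map J.mkQ (Ψ^[n] J) = Submodule.map J.mkQ (Ψ^[n+1] J) := hn (n+1) (Nat.le_succ n)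
    have h2 := congrArg (Submodule.comap J.mkQ) h1
    rw [Submodule.comap_map_mkQ, Submodule.comap_map_mkQ, sup_eq_right.2 (hPn n).1,
      sup_eq_right.2 (hPn (n+1)).1] at h2
    exact h2.ge
  have hdesc : ∀ n, Ψ^[n+1] J ≤ Ψ^[n] J → Ψ J ≤ J := by
    intro n
    induction n with
    | zero => exact id
    | succ n ih =>
      intro h
      refine ih (hle _ _ (hPn _) (hPn _) ?_)
      rwa [← Function.iterate_succ_apply' Ψ (n+1), ← Function.iterate_succ_apply' Ψ n]
  refine hdesc n hn1 ?_
  intro s hs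
  rw [h s hs]
  exact Ideal.zero_mem _

lemma lann_rann (hc : Core A J) (hi : Inj A) (L : Ideal A) (hL : J ≤ L) :
    lann (A := A) (rann (A := A) L) = L := by
  apply le_antisymm
  · intro c h
    obtain ⟨e, he, h1⟩ := exists_e hc L hL
    have h2 : c * (1 - e) ∈ J := lann_S hc hi _ fun s hs => by
      rw [mul_assoc]
      refine h _ fun a ha => ?_
      rw [← mul_assoc, mul_sub, mul_one]
      exact hs _ (h1 a ha)
    have : c = c * (1 - e) + c * e := by noncomm_ring
    rw [this]
    exact L.add_mem (hL h2) (L.mul_mem_left c he)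
  · intro c h x hx
    exact hx c h

lemma socle_right (hc : Core A J) (hi : Inj A) (x : A) : x ∈ socle Aᵐᵒᵖ A ↔ x ∈ S J hc.two := by
  constructor
  · intro hx
    have h : socle Aᵐᵒᵖ A ≤ rann (A := A) J := by
      refine sSup_le fun T hT x hx j hj => ?_
      have : IsSimpleModule Aᵐᵒᵖ T := hT
      by_cases hx0 : x = 0
      · rw [hx0, mul_zero]
      have hne : lann {x} ⊔ J ≠ ⊤ := by
        intro htop
        have h1 : (1 : A) ∈ lann {x} ⊔ J := by rw [htop]; trivial
        obtain ⟨l, hl, k, hk, hlk⟩ := Submodule.mem_sup.1 h1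
        have h2 : (1 - k) * x = 0 := by
          rw [← hlk, add_sub_cancel_right]; exact hl x rfl
        exact hx0 ((hc.unit k hk).mul_right_eq_zero.1 h2)
      have hy : ∃ y ∈ rann (A := A) (lann {x} ⊔ J : Ideal A), y ≠ 0 := by
        by_contra hcon
        push Not at hcon
        refine hne ?_
        rw [← lann_rann hc hi _ le_sup_right, Ideal.eq_top_iff_one]
        intro y hy
        rw [hcon y hy, mul_zero]
      obtain ⟨y, hy, hy0⟩ := hy
      obtain ⟨a, ha⟩ := inj2 hi x y (fun c hcx => hy c (Submodule.mem_sup_left (by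
        intro w hw; rw [Set.mem_singleton_iff.1 hw]; exact hcx)))
      have hyT : y ∈ T := by
        rw [ha, ← op_smul_eq_mul]; exact T.smul_mem _ hx
      obtain ⟨d, hd⟩ := simple_prop T y x hyT hx hy0
      rw [← hd, ← MulOpposite.op_unop d, op_smul_eq_mul, ← mul_assoc,
        hy j (Submodule.mem_sup_right hj), zero_mul]
    exact h hx
  · intro hx
    rw [S_eq hc] at hx
    have key : ∀ x ∈ socle A A, x ∈ (socle Aᵐᵒᵖ A).toAddSubgroup := by
      intro x hx
      have h1 : x ∈ ((socle A A)).toAddSubmonoid := hx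
      rw [socle, sSup_eq_iSup', Submodule.iSup_toAddSubmonoid] at h1
      have h2 : (⨆ i : {N : Submodule A A | IsSimpleModule A N}, i.1.toAddSubmonoid) ≤
          (socle Aᵐᵒᵖ A).toAddSubmonoid := by
        refine iSup_le fun T x hx => ?_
        have : IsSimpleModule A T.1 := T.2
        refine mem_socle_of (R := Aᵐᵒᵖ) x fun c hcx => ?_
        rw [← MulOpposite.op_unop c, op_smul_eq_mul] at hcx
        obtain ⟨b, hb⟩ := simple_flip hi x
          (fun c hcx => simple_prop T.1 _ _ (Submodule.smul_mem _ c hx) hx hcx) _ hcx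
        refine ⟨MulOpposite.op b, ?_⟩
        rw [← MulOpposite.op_unop c, op_smul_eq_mul, op_smul_eq_mul, hb]
      exact h2 h1
    exact key x hx

lemma fg_right (hc : Core A J) (hinj : Module.Injective A A) (I : Submodule Aᵐᵒᵖ A)
    (hI : ∀ x ∈ I, x ∈ S J hc.two) : I.FG := by
  have := hc.ss
  have : IsArtinian A (A ⧸ J) := inferInstance
  let X : Set (Submodule A (A ⧸ J)) :=
    {L | ∃ I' : Submodule Aᵐᵒᵖ A, I' ≤ I ∧ I'.FG ∧ L = Submodule.map J.mkQ (lann (A := A) I')}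
  have hX : X.Nonempty := ⟨_, ⊥, bot_le, Submodule.fg_bot, rfl⟩
  obtain ⟨L, ⟨I', h1, h2, rfl⟩, hmin⟩ := WellFounded.has_min
    (wellFounded_lt (α := Submodule A (A ⧸ J))) X hX
  suffices h : I ≤ I' by rwa [le_antisymm h h1]
  intro x hx
  have hJl : ∀ I'' : Submodule Aᵐᵒᵖ A, I'' ≤ I → J ≤ lann (A := A) I'' :=
    fun I'' hI'' j hj y hy => hI y (hI'' hy) j hj
  let I2 : Submodule Aᵐᵒᵖ A := I' ⊔ Submodule.span Aᵐᵒᵖ {x}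
  have h3 : I2 ≤ I := sup_le h1 (by rwa [Submodule.span_singleton_le_iff_mem])
  have h4 := hmin _ ⟨I2, h3, h2.sup (Submodule.fg_span_singleton x), rfl⟩
  have h5 : lann (A := A) I2 ≤ lann (A := A) I' := fun c hcc y hy =>
    hcc y (Submodule.mem_sup_left hy)
  have h6 : Submodule.map J.mkQ (lann (A := A) I2) = Submodule.map J.mkQ (lann (A := A) I') :=
    eq_of_le_of_not_lt (Submodule.map_mono h5) h4
  have h7 := congrArg (Submodule.comap J.mkQ) h6
  rw [Submodule.comap_map_mkQ, Submodule.comap_map_mkQ, sup_eq_right.2 (hJl _ h3),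
    sup_eq_right.2 (hJl _ h1)] at h7
  refine rann_lann_fg hinj I' h2 ?_
  intro c hcc
  have : c ∈ lann (A := A) I2 := by rw [h7]; exact hcc
  exact this x (Submodule.mem_sup_right (Submodule.mem_span_singleton_self x))

lemma rann_lann (hc : Core A J) (hinj : Module.Injective A A) (I : Submodule Aᵐᵒᵖ A)
    (hI : ∀ x ∈ I, x ∈ S J hc.two) : rann (A := A) (lann (A := A) I) = I :=
  le_antisymm (rann_lann_fg hinj I (fg_right hc hinj I hI)) fun _ hx _ hcc => hcc _ hx

lemma length_right (hc : Core A J) (hinj : Module.Injective A A) :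
    moduleLength Aᵐᵒᵖ (socle Aᵐᵒᵖ A) = Order.krullDim (Set.Ici J) := by
  have hi := inj_of A hinj
  have hs : ∀ I : Set.Iic (socle Aᵐᵒᵖ A), ∀ x ∈ I.1, x ∈ S J hc.two :=
    fun I x hx => (socle_right hc hi x).1 (I.2 hx)
  let φ : (Set.Ici J)ᵒᵈ ≃o Set.Iic (socle Aᵐᵒᵖ A) :=
    { toFun := fun L => ⟨rann (A := A) (OrderDual.ofDual L).1, fun x hx =>
        (socle_right hc hi x).2 fun j hj => hx j ((OrderDual.ofDual L).2 hj)⟩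
      invFun := fun I => OrderDual.toDual ⟨lann (A := A) I.1, fun j hj x hx => hs I x hx j hj⟩
      left_inv := fun L => by
        apply OrderDual.ofDual.injective
        exact Subtype.ext (lann_rann hc hi _ (OrderDual.ofDual L).2)
      right_inv := fun I => Subtype.ext (rann_lann hc hinj _ (hs I))
      map_rel_iff' := by
        intro L L'
        constructor
        · intro h
          change (OrderDual.ofDual L').1 ≤ (OrderDual.ofDual L).1
          rw [← lann_rann hc hi _ (OrderDual.ofDual L).2]
          intro c hcc x hx
          exact (h hx : x ∈ rann (A := A) (OrderDual.ofDual L').1) c hcc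
        · intro h x hx c hcc
          exact hx c ((h : (OrderDual.ofDual L').1 ≤ (OrderDual.ofDual L).1) hcc) }
  rw [moduleLength, Order.krullDim_eq_of_orderIso (Submodule.mapIic _),
    ← Order.krullDim_eq_of_orderIso φ, Order.krullDim_orderDual]

lemma length_left (hc : Core A J) (hi : Inj A) :
    moduleLength A (socle A A) = Order.krullDim (Set.Ici J) := by
  rw [← S_eq hc]
  have hPJ : ∀ N, J ≤ Phi hc N := fun N j hj s hs => by
    rw [S_J hc hi s hs j hj]; exact N.zero_mem
  have hmul : ∀ N ≤ S J hc.two, S J hc.two * Phi hc N = N := by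
    intro N hN
    apply le_antisymm
    · exact Ideal.mul_le.2 fun s hs b hb => hb s hs
    · intro x hx
      obtain ⟨b, hb1, hb2⟩ := exists_proj hc hi N hN
      rw [← hb2 x hx]
      exact Ideal.mul_mem_mul (hN hx) hb1
  let φ : Set.Iic (S J hc.two) ≃o Set.Ici J :=
    { toFun := fun N => ⟨Phi hc N.1, hPJ _⟩
      invFun := fun L => ⟨S J hc.two * L.1, Ideal.mul_le.2 fun s hs a _ => S_right hc s hs a⟩
      left_inv := fun N => Subtype.ext (hmul _ N.2)
      right_inv := fun L => Subtype.ext (Phi_mul hc hi _ L.2)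
      map_rel_iff' := by
        intro N N'
        constructor
        · intro h
          change N.1 ≤ N'.1
          rw [← hmul _ N.2, ← hmul _ N'.2]
          exact Ideal.mul_mono_right h
        · intro h b hb s hs
          exact (h : N.1 ≤ N'.1) (hb s hs) }
  rw [moduleLength, Order.krullDim_eq_of_orderIso (Submodule.mapIic _),
    Order.krullDim_eq_of_orderIso φ]

end core

end SocleProof

/-- For a left self-injective semiprimary ring `A`, the right socle of `A` coincides with
the left socle, it is finitely generated as a right `A`-module, and its length as a left
`A`-module equals its length as a right `A`-module. -/
theorem socle_left_eq_right_of_selfinjective_semiprimary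
    (A : Type u) [Ring A] (hsp : IsSemiprimary A) (hinj : Module.Injective A A) :
    (∀ x : A, x ∈ socle Aᵐᵒᵖ A ↔ x ∈ socle A A) ∧
    (socle Aᵐᵒᵖ A).FG ∧
    moduleLength A (socle A A) = moduleLength Aᵐᵒᵖ (socle Aᵐᵒᵖ A) := by
  
  have hc := SocleProof.core_of A hsp
  have hi := SocleProof.inj_of A hinj
  refine ⟨fun x => ?_, ?_, ?_⟩
  · rw [SocleProof.socle_right hc hi x, SocleProof.S_eq hc]
  · exact SocleProof.fg_right hc hinj _ fun x hx => (SocleProof.socle_right hc hi x).1 hx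
  · rw [SocleProof.length_left hc hi, SocleProof.length_right hc hinj]
end

section
/- Let A be a left self-injective semiprimary ring. Then Hom_A(T, A) ≠ 0 for every simple right A-module T; equivalently, every simple right A-module embeds into A as a right module. -/
universe u v

open Cardinal

/-- If long products of elements of `K` vanish, then every nonzero `y` has a nonzero left multiple
killed by `K`. -/
lemma exists_mul_ne_zero_killed {A : Type*} [Ring A] (K : A → Prop) (n : ℕ) :
    ∀ y : A, y ≠ 0 → (∀ l : List A, l.length = n → (∀ a ∈ l, K a) → l.prod * y = 0) →
      ∃ c : A, c * y ≠ 0 ∧ ∀ k, K k → k * (c * y) = 0 := by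
  induction n with
  | zero =>
    intro y hy h
    exact absurd (by simpa using h [] rfl (by simp)) hy
  | succ n ih =>
    intro y hy h
    by_cases hk : ∀ k, K k → k * y = 0
    · exact ⟨1, by simpa using hy, by simpa using hk⟩
    · push Not at hk
      obtain ⟨k, hk, hky⟩ := hk
      obtain ⟨c, hc, hcK⟩ := ih (k * y) hky (by
        intro l hl hlK
        have := h (l ++ [k]) (by simp [hl]) (by
          intro a ha
          rcases List.mem_append.1 ha with ha | ha
          · exact hlK a ha
          · rw [List.mem_singleton.1 ha]; exact hk)
        simpa [mul_assoc] using this)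
      exact ⟨c * k, by simpa [mul_assoc] using hc, by simpa [mul_assoc] using hcK⟩

/-- A nonzero element killed by the kernel of a surjection to a semisimple ring has a left multiple
generating a simple left ideal. -/
lemma exists_simple_multiple {A : Type*} {S : Type*} [Ring A] [Ring S] [IsSemisimpleRing S]
    (π : A →+* S) (hπ : Function.Surjective π) (y : A) (hy : y ≠ 0)
    (hK : ∀ k, π k = 0 → k * y = 0) :
    ∃ c : A, c * y ≠ 0 ∧ ∀ a, a * (c * y) ≠ 0 → ∃ b, b * (a * (c * y)) = c * y := by
  let L : Submodule S S :=
    { carrier := {s | ∃ a, π a = s ∧ a * y = 0}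
      zero_mem' := ⟨0, by simp⟩
      add_mem' := by
        rintro _ _ ⟨a, rfl, ha⟩ ⟨b, rfl, hb⟩
        exact ⟨a + b, by simp, by simp [add_mul, ha, hb]⟩
      smul_mem' := by
        rintro s _ ⟨a, rfl, ha⟩
        obtain ⟨b, rfl⟩ := hπ s
        exact ⟨b * a, by simp, by simp [mul_assoc, ha]⟩ }
  have hL : ∀ a, π a ∈ L → a * y = 0 := by
    rintro a ⟨b, hb, hby⟩
    have := hK (a - b) (by simp [hb])
    rwa [sub_mul, hby, sub_zero] at this
  obtain ⟨N, hN⟩ := exists_isCompl L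
  rcases IsSemisimpleModule.eq_bot_or_exists_simple_le N with hb | ⟨P, hPN, hP⟩
  · rw [hb] at hN
    have : L = ⊤ := by simpa using hN.sup_eq_top
    exact absurd (by simpa using hL 1 (by rw [this]; trivial)) hy
  · have := hP.nontrivial
    obtain ⟨p, hpP, hp0⟩ := P.ne_bot_iff.1 (by
      rintro rfl
      exact not_subsingleton (⊥ : Submodule S S) inferInstance)
    obtain ⟨c, rfl⟩ := hπ p
    refine ⟨c, ?_, ?_⟩
    · intro h0
      exact hp0 ((Submodule.disjoint_def.1 hN.disjoint) _ ⟨c, rfl, h0⟩ (hPN hpP))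
    · intro a ha
      have h1 : π (a * c) ≠ 0 := by
        intro h
        apply ha
        rw [← mul_assoc]
        exact hK _ h
      have h2 : π (a * c) ∈ P := by
        rw [map_mul]; exact P.smul_mem _ hpP
      have h3 : Submodule.span S {(⟨_, h2⟩ : P)} = ⊤ :=
        (IsSimpleModule.span_singleton_eq_top S (by simpa [Subtype.ext_iff] using h1))
      obtain ⟨s, hs⟩ := Submodule.mem_span_singleton.1
        (h3 ▸ Submodule.mem_top : (⟨_, hpP⟩ : P) ∈ Submodule.span S {(⟨_, h2⟩ : P)})
      obtain ⟨b, rfl⟩ := hπ s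
      have h4 : π b * π (a * c) = π c := congrArg Subtype.val hs
      refine ⟨b, ?_⟩
      have := hK (b * (a * c) - c) (by rw [map_sub, map_mul, h4, sub_self])
      rw [sub_mul, sub_eq_zero] at this
      simpa [mul_assoc] using this

/-- In a left self-injective ring, a generator of a simple left ideal is killed on the right by
every `j` all of whose right multiples `j * b` make `1 - j * b` a unit. -/
lemma mul_eq_zero_of_simple {A : Type u} [Ring A] (hinj : Module.Injective A A) (x j : A)
    (hx : ∀ a, a * x ≠ 0 → ∃ b, b * (a * x) = x) (hj : ∀ b, IsUnit (1 - j * b)) :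
    x * j = 0 := by
  by_contra hne
  let f : Submodule.span A {x} →ₗ[A] A :=
    (LinearMap.toSpanSingleton A A j).comp (Submodule.span A {x}).subtype
  have hf : Function.Injective f := by
    rw [injective_iff_map_eq_zero]
    rintro ⟨z, hz⟩ h
    obtain ⟨a, rfl⟩ := Submodule.mem_span_singleton.1 hz
    have hx1 : a * x * j = 0 := h
    by_contra h0
    obtain ⟨b, hb⟩ := hx a (fun h ↦ h0 (Subtype.ext h))
    apply hne
    rw [← hb, mul_assoc, hx1, mul_zero]
  obtain ⟨h, hh⟩ := hinj.out f hf (Submodule.span A {x}).subtype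
  have h1 : h (x * j) = x := hh ⟨x, Submodule.mem_span_singleton_self x⟩
  have h2 : h (x * j) = x * j * h 1 := by
    have := h.map_smul (x * j) 1
    simpa using this
  have h3 : x * (1 - j * h 1) = 0 := by
    rw [mul_sub, mul_one, ← mul_assoc, ← h2, h1, sub_self]
  exact hne (by rw [(hj (h 1)).mul_left_eq_zero.1 h3, zero_mul])

lemma right_simple_core {A : Type u} {S : Type*} [Ring A] [Ring S] [IsSemisimpleRing S]
    (π : A →+* S) (hπ : Function.Surjective π) (n : ℕ)
    (hn : ∀ l : List A, l.length = n → (∀ a ∈ l, π a = 0) → l.prod = 0)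
    (hinj : Module.Injective A A)
    (T : Type v) [AddCommGroup T] [Module Aᵐᵒᵖ T] [IsSimpleModule Aᵐᵒᵖ T] :
    ∃ f : T →ₗ[Aᵐᵒᵖ] A, f ≠ 0 := by
  have hnil : ∀ k, π k = 0 → IsNilpotent k := fun k hk ↦ ⟨n, by
    simpa using hn (List.replicate n k) (by simp) (by
      intro a ha; rw [List.eq_of_mem_replicate ha]; exact hk)⟩
  have hunit : ∀ k, π k = 0 → ∀ b, IsUnit (1 - k * b) := fun k hk b ↦
    (hnil (k * b) (by simp [hk])).isUnit_one_sub
  have := IsSimpleModule.nontrivial Aᵐᵒᵖ T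
  obtain ⟨t, ht⟩ := exists_ne (0 : T)
  have hkt : ∀ k, π k = 0 → MulOpposite.op k • t = 0 := by
    intro k hk
    by_contra h
    have h3 := IsSimpleModule.span_singleton_eq_top Aᵐᵒᵖ h
    obtain ⟨s, hs⟩ := Submodule.mem_span_singleton.1 (h3 ▸ Submodule.mem_top :
      t ∈ Submodule.span Aᵐᵒᵖ {MulOpposite.op k • t})
    obtain ⟨u, hu⟩ := hunit k hk s.unop
    have h4 : MulOpposite.op (u : A) • t = 0 := by
      rw [hu, MulOpposite.op_sub, sub_smul, MulOpposite.op_mul, mul_smul, MulOpposite.op_unop, hs]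
      simp
    apply ht
    have h5 : MulOpposite.op ((u⁻¹ : Aˣ) : A) • MulOpposite.op (u : A) • t = t := by
      rw [← mul_smul, ← MulOpposite.op_mul]; simp
    rw [← h5, h4, smul_zero]
  let M : Submodule Sᵐᵒᵖ S :=
    { carrier := {s | ∃ a, π a = s ∧ MulOpposite.op a • t = 0}
      zero_mem' := ⟨0, by simp⟩
      add_mem' := by
        rintro _ _ ⟨a, rfl, ha⟩ ⟨b, rfl, hb⟩
        exact ⟨a + b, by simp, by simp [add_smul, ha, hb]⟩
      smul_mem' := by
        rintro s _ ⟨a, rfl, ha⟩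
        obtain ⟨b, hb⟩ := hπ s.unop
        refine ⟨a * b, by simp [hb], by simp [mul_smul, ha]⟩ }
  obtain ⟨N, hN⟩ := exists_isCompl M
  obtain ⟨f, hf, e, he, hfe⟩ := Submodule.mem_sup.1
    (hN.sup_eq_top ▸ Submodule.mem_top : (1 : S) ∈ M ⊔ N)
  have heM : ∀ m ∈ M, e * m = 0 := by
    intro m hm
    refine (Submodule.disjoint_def.1 hN.disjoint) _ ?_ (N.smul_mem (MulOpposite.op m) he)
    have : e * m = m - f * m := by
      rw [eq_sub_iff_add_eq, ← add_mul, add_comm, hfe, one_mul]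
    rw [this]
    exact M.sub_mem hm (M.smul_mem (MulOpposite.op m) hf)
  have hidem : IsIdempotentElem e := by
    have : e * (f + e) = e := by rw [hfe, mul_one]
    rwa [mul_add, heM f hf, zero_add] at this
  obtain ⟨e', he', rfl⟩ := exists_isIdempotentElem_eq_of_ker_isNilpotent π
    (fun x hx ↦ hnil x hx) e (hπ e) hidem
  have he0 : e' ≠ 0 := by
    rintro rfl
    rw [map_zero, add_zero] at hfe
    obtain ⟨a, ha, hat⟩ := hf
    have := hkt (1 - a) (by rw [map_sub, map_one, ha, hfe, sub_self])
    rw [MulOpposite.op_sub, sub_smul, hat] at this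
    exact ht (by simpa using this)
  obtain ⟨c, hc0, hcK⟩ := exists_mul_ne_zero_killed (fun a ↦ π a = 0) n e' he0
    (fun l hl hlK ↦ by rw [hn l hl hlK, zero_mul])
  obtain ⟨d, hd0, hd⟩ := exists_simple_multiple π hπ (c * e') hc0 hcK
  obtain ⟨x, hxd⟩ : ∃ x, x = d * (c * e') := ⟨_, rfl⟩
  rw [← hxd] at hd hd0
  have hxe : x * e' = x := by rw [hxd, mul_assoc, mul_assoc, he'.eq]
  have hxM : ∀ a : A, MulOpposite.op a • t = 0 → x * a = 0 := by
    intro a ha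
    rw [← hxe, mul_assoc]
    apply mul_eq_zero_of_simple hinj x _ hd
    apply hunit
    rw [map_mul]
    exact heM _ ⟨a, rfl, ha⟩
  let g := LinearMap.toSpanSingleton Aᵐᵒᵖ T t
  have hg : Function.Surjective g := by
    rw [← LinearMap.range_eq_top, LinearMap.range_toSpanSingleton]
    exact IsSimpleModule.span_singleton_eq_top Aᵐᵒᵖ ht
  let q : (Aᵐᵒᵖ ⧸ LinearMap.ker g) →ₗ[Aᵐᵒᵖ] A :=
    (LinearMap.ker g).liftQ (LinearMap.toSpanSingleton Aᵐᵒᵖ A x) (by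
      intro a ha
      exact hxM a.unop ha)
  refine ⟨q.comp (g.quotKerEquivOfSurjective hg).symm.toLinearMap, ?_⟩
  intro h
  apply hd0
  have := LinearMap.congr_fun h (g.quotKerEquivOfSurjective hg (Submodule.Quotient.mk 1))
  rw [LinearMap.comp_apply, LinearEquiv.coe_coe, LinearEquiv.symm_apply_apply] at this
  have hx1 : MulOpposite.op (1 : A) • x = 0 := this
  simpa using hx1

/-- For a left self-injective semiprimary ring `A`, every simple right `A`-module `T`
satisfies `Hom_A(T, A) ≠ 0`; equivalently, `T` embeds into `A` as a right module. -/
theorem hom_simple_right_ne_zero_of_selfinjective_semiprimary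
    (A : Type u) [Ring A] (hsp : IsSemiprimary A) (hinj : Module.Injective A A) :
    ∀ (T : Type v) [AddCommGroup T] [Module Aᵐᵒᵖ T], IsSimpleModule Aᵐᵒᵖ T →
      (∃ f : T →ₗ[Aᵐᵒᵖ] A, f ≠ 0) ∧ ∃ f : T →ₗ[Aᵐᵒᵖ] A, Function.Injective f := by
  intro T _ _ hT
  obtain ⟨hss, n, -, hn⟩ := hsp
  suffices h : ∃ f : T →ₗ[Aᵐᵒᵖ] A, f ≠ 0 by
    obtain ⟨f, hf⟩ := h
    exact ⟨⟨f, hf⟩, f, LinearMap.injective_of_ne_zero hf⟩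
  refine right_simple_core (⊥ : TwoSidedIdeal A).jacobson.ringCon.mk'
    (RingCon.mk'_surjective _) n ?_ hinj T
  intro l hl hlK
  subst hl
  have := hn l.get (by
    intro i
    have h1 := hlK (l.get i) (List.get_mem l i)
    rw [← TwoSidedIdeal.mem_ker, TwoSidedIdeal.ker_ringCon_mk', TwoSidedIdeal.mem_jacobson_iff]
      at h1
    rw [Ideal.mem_jacobson_iff]
    simpa using h1)
  simpa using this
end

section
/- Let A be a left self-injective semiprimary ring and e an idempotent of A such that Ae is an indecomposable left A-module. Then the socle of the left A-module Ae is simple. -/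
universe u

open Cardinal

theorem semisimple_quot_aux (A : Type u) [Ring A] (hsp : IsSemiprimary A) :
    IsSemisimpleRing (A ⧸ Ring.jacobson A) := by
  have h1 := hsp.1
  refine RingHom.isSemisimpleRing_of_surjective
    (RingCon.lift (⊥ : TwoSidedIdeal A).jacobson.ringCon
      (Ideal.Quotient.mk (Ring.jacobson A)) ?_) ?_
  · intro x y hxy
    rw [TwoSidedIdeal.rel_iff] at hxy
    have h2 : x - y ∈ TwoSidedIdeal.asIdeal (⊥ : TwoSidedIdeal A).jacobson := by
      simpa using hxy
    rw [TwoSidedIdeal.asIdeal_jacobson] at h2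
    have h3 : TwoSidedIdeal.asIdeal (⊥ : TwoSidedIdeal A) = ⊥ := by
      ext z; simp
    rw [h3, Ideal.jacobson_bot] at h2
    exact Ideal.Quotient.eq.mpr h2
  · intro y
    obtain ⟨x, rfl⟩ := Ideal.Quotient.mk_surjective y
    exact ⟨(x : RingCon.Quotient _), rfl⟩

theorem exists_killed_aux (A : Type u) [Ring A] (J : Ideal A) {M : Type*} [AddCommGroup M]
    [Module A M] (n : ℕ) : ∀ m : M, m ≠ 0 →
    (∀ f : Fin n → A, (∀ i, f i ∈ J) → (List.ofFn f).prod • m = 0) →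
    ∃ m' : M, m' ≠ 0 ∧ ∀ j ∈ J, j • m' = 0 := by
  induction n with
  | zero =>
    intro m hm h
    exact absurd (by simpa using h (fun _ => 0) (fun i => i.elim0)) hm
  | succ n ih =>
    intro m hm h
    by_cases hk : ∀ j ∈ J, j • m = 0
    · exact ⟨m, hm, hk⟩
    · push Not at hk
      obtain ⟨j, hj, hjm⟩ := hk
      refine ih (j • m) hjm fun f hf => ?_
      have := h (Fin.snoc f j) (fun i => by
        refine Fin.lastCases ?_ (fun i => ?_) i
        · simpa using hj
        · simpa using hf i)
      rw [List.ofFn_succ'] at this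
      simpa [mul_smul] using this

theorem exists_simple_aux (A : Type u) [Ring A] (hsp : IsSemiprimary A) (M : Type u)
    [AddCommGroup M] [Module A M] [Nontrivial M] :
    ∃ S : Submodule A M, IsSimpleModule A S := by
  have hss := semisimple_quot_aux A hsp
  obtain ⟨n, -, hn⟩ := hsp.2
  obtain ⟨m, hm⟩ := exists_ne (0 : M)
  obtain ⟨x, hx, hJ⟩ := exists_killed_aux A (Ideal.jacobson ⊥) n m hm
    (fun f hf => by rw [hn f hf, zero_smul])
  rw [Ideal.jacobson_bot] at hJ
  let N := Submodule.span A {x}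
  have hT : Module.IsTorsionBySet A N (Ring.jacobson A) := by
    rintro ⟨y, hy⟩ ⟨j, hj⟩
    obtain ⟨a, rfl⟩ := Submodule.mem_span_singleton.mp hy
    ext
    change j • a • x = 0
    rw [← mul_smul]
    exact hJ _ (Ideal.mul_mem_right a _ hj)
  have hN : IsSemisimpleModule A N := by
    let _ := hT.module
    exact (hT.semilinearMap.isSemisimpleModule_iff_of_bijective Function.bijective_id).2
      inferInstance
  have : Nontrivial N :=
    ⟨⟨⟨x, Submodule.mem_span_singleton_self x⟩, 0, fun h => hx (congrArg Subtype.val h)⟩⟩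
  obtain ⟨S, hS⟩ := IsSemisimpleModule.exists_simple_submodule A N
  exact ⟨S.map N.subtype, IsSimpleModule.congr
    (Submodule.equivMapOfInjective N.subtype N.injective_subtype S).symm⟩

theorem exists_maximal_disjoint_aux {A : Type*} [Ring A] {M : Type*} [AddCommGroup M] [Module A M]
    (S T : Submodule A M) (h : Disjoint S T) :
    ∃ N, S ≤ N ∧ Disjoint N T ∧ ∀ K, N ≤ K → Disjoint K T → K ≤ N := by
  obtain ⟨N, hSN, hN⟩ := zorn_le_nonempty₀ {K : Submodule A M | Disjoint K T}
    (fun c hc hch y hy => ⟨sSup c, by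
      rw [Set.mem_ofPred_eq, Submodule.disjoint_def]
      intro x hx hxT
      obtain ⟨K, hK, hxK⟩ := (Submodule.mem_sSup_of_directed ⟨y, hy⟩ hch.directedOn).mp hx
      exact Submodule.disjoint_def.mp (hc hK) x hxK hxT, fun z hz => le_sSup hz⟩) S h
  exact ⟨N, hSN, hN.prop, fun K hK hd => hN.2 hd hK⟩

/-- In an indecomposable summand of an injective module, nonzero submodules meet. -/
theorem not_disjoint_aux (A : Type u) [Ring A] {M : Type u} [AddCommGroup M] [Module A M]
    (hM : ∀ (P : Type u) [AddCommGroup P] [Module A P] (f : P →ₗ[A] M)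
      (_ : Function.Injective f) (g : P →ₗ[A] M), ∃ h : M →ₗ[A] M, ∀ x, h (f x) = g x)
    (hind : IsIndecomposableModule A M) (S T : Submodule A M) (hST : Disjoint S T) :
    S = ⊥ ∨ T = ⊥ := by
  obtain ⟨N, hSN, hNT, hNmax⟩ := exists_maximal_disjoint_aux S T hST
  obtain ⟨T', hTT, hTN, hTmax⟩ := exists_maximal_disjoint_aux T N hNT.symm
  obtain ⟨h, hh⟩ := hM (N × T') (LinearMap.coprod N.subtype T'.subtype) (by
    rw [← LinearMap.ker_eq_bot, LinearMap.ker_eq_bot']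
    rintro ⟨⟨a, ha⟩, ⟨b, hb⟩⟩ hab
    have hab' : a + b = 0 := by simpa using hab
    have h1 : b = 0 := Submodule.disjoint_def.mp hTN b hb (by
      rw [eq_neg_of_add_eq_zero_right hab']; exact N.neg_mem ha)
    have h2 : a = 0 := by simpa [h1] using hab'
    subst h1 h2
    rfl) (T'.subtype ∘ₗ LinearMap.snd A N T')
  have hN0 : ∀ a ∈ N, h a = 0 := fun a ha => by simpa using hh (⟨a, ha⟩, 0)
  have hT1 : ∀ b ∈ T', h b = b := fun b hb => by simpa using hh (0, ⟨b, hb⟩)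
  have hcomap : N.comap h ≤ N := hNmax _ (fun a ha => by simp [hN0 a ha]) (by
    rw [Submodule.disjoint_def]
    intro x hx hxT
    have : h x ∈ N := hx
    rw [hT1 x (hTT hxT)] at this
    exact Submodule.disjoint_def.mp hNT x this hxT)
  have hrange : LinearMap.range h ≤ T' := hTmax _ (fun b hb => ⟨b, hT1 b hb⟩) (by
    rw [Submodule.disjoint_def]
    rintro _ ⟨y, rfl⟩ hy
    exact hN0 y (hcomap hy))
  have hc : IsCompl N T' := by
    refine ⟨hTN.symm, codisjoint_iff.mpr (eq_top_iff.mpr fun x _ => ?_)⟩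
    have hx : h x ∈ T' := hrange ⟨x, rfl⟩
    refine Submodule.mem_sup.mpr ⟨x - h x, hcomap ?_, h x, hx, sub_add_cancel _ _⟩
    simp [hT1 _ hx]
  rcases hind.2 N T' hc with h0 | h0
  · left; exact le_bot_iff.mp (h0 ▸ hSN)
  · right; exact le_bot_iff.mp (h0 ▸ hTT)

/-- For a left self-injective semiprimary ring `A` and an idempotent `e` such that the left
`A`-module `Ae` is indecomposable, the socle of `Ae` is a simple module. -/
theorem socle_simple_of_indecomposable_projective
    (A : Type u) [Ring A] (hsp : IsSemiprimary A) (hinj : Module.Injective A A)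
    (e : A) (he : IsIdempotentElem e)
    (hind : IsIndecomposableModule A (Submodule.span A {e})) :
    IsSimpleModule A (socle A (Submodule.span A {e})) := by
  have := hind.1
  obtain ⟨S, hS⟩ := exists_simple_aux A hsp (Submodule.span A {e})
  have key : ∀ T : Submodule A (Submodule.span A {e}), IsSimpleModule A T → T = S := by
    intro T hT
    by_contra hne
    have hSa := isSimpleModule_iff_isAtom.mp hS
    have hTa := isSimpleModule_iff_isAtom.mp hT
    rcases not_disjoint_aux A (fun P _ _ f hf g => by
      obtain ⟨k, hk⟩ := Module.Injective.extension_property A A P _ f hf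
        ((Submodule.span A {e}).subtype ∘ₗ g)
      refine ⟨LinearMap.toSpanSingleton A (Submodule.span A {e})
        ⟨e, Submodule.mem_span_singleton_self e⟩ ∘ₗ k, fun x => ?_⟩
      have h1 : k (f x) = (g x : A) := LinearMap.congr_fun hk x
      obtain ⟨a, ha⟩ := Submodule.mem_span_singleton.mp (g x).2
      ext
      simp only [LinearMap.comp_apply, h1, LinearMap.toSpanSingleton_apply, Submodule.coe_smul,
        smul_eq_mul]
      rw [← ha, smul_eq_mul, mul_assoc, he.eq]) hind T S
        (hTa.disjoint_of_ne hSa hne) with h | h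
    · exact hTa.1 h
    · exact hSa.1 h
  have : socle A (Submodule.span A {e}) = S := by
    refine le_antisymm (sSup_le fun T hT => (key T hT).le) (le_sSup hS)
  rw [this]
  exact hS
end
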